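/- arXiv:1009.4430 — 3 statements merged into one kernel-verified Lean document; each statement's English description precedes it below -/
import Mathlib

section
/- Let n be a positive integer and let R ∈ Q_{2n} be an odd function on [−1,1] that is increasing on [−1,1]. Then R'(0) ≤ (1/2)·9^n · R(1). -/
/-!
The proof compares `R` with an explicit odd rational function having one "step" per node.
Put `m = n - 1`, `c = R 1` and, for `x ∈ (0, 1)`, `s = log (x² / (1 - x²))`. In the coordinate `s`
the comparison function is
`R* = 4 c x / (1 + 3 x²) * ∏ⱼ (x-dependent step centred at sⱼ)`, each step decreasing from `9` at
`s = -∞` to `1` at `s = +∞`. Thus `R*` is of the form odd/even of degree `2n`, `R* 1 = R 1`,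
and the slope of `R*` at `0` is `4 · 9^m · R 1 < (1/2) · 9^n · R 1`.

Suppose `R'(0) > (1/2) · 9^n · R 1`. Then `log (R / R*)` (the function `force` below, with
`φ = log (R (1 + 3x²) / (4 c x))`) is positive near `s = -∞`, and it is negative near `s = +∞`
because `R ≤ R 1 < R*` just left of `x = 1`. The nodes `sⱼ` are chosen so that `R = R*` at every
node. As each step has logarithmic slope `-1/2` at its own node while monotonicity of `R` forces
`φ' > -1/2`, every node is then an upcrossing of `log (R / R*)`. Alternating with downcrossings this
gives `2m + 1` zeros in `(0, 1)`. Together with `x = 1`, the reflections `x ↦ -x`, and `0`, the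
polynomial `p q* - p* q`, of degree at most `4n`, has `4n + 1` zeros; hence it vanishes, which is
absurd.

The existence of distinct nodes (`exists_nodes`) is variational: the equations say that `s` is a
critical point of an `energy` with external potential `∫ φ` and a convex, hence repulsive, pair
interaction `∫ kap`. A maximum over a large box is interior by the behaviour of `φ` at the ends,
and two nodes cannot coincide there because separating them increases the energy to second order.
-/


/-- `QMem m R` means `R` agrees on `[-1,1]` with a rational function `p/q`, where
`p, q` are real polynomials of degree at most `m` and `q` has no zeros on `[-1,1]`. -/
def QMem (m : ℕ) (R : ℝ → ℝ) : Prop :=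
  ∃ p q : Polynomial ℝ, p.natDegree ≤ m ∧ q.natDegree ≤ m ∧
    (∀ x ∈ Set.Icc (-1:ℝ) 1, Polynomial.eval x q ≠ 0) ∧
    (∀ x ∈ Set.Icc (-1:ℝ) 1, R x = Polynomial.eval x p / Polynomial.eval x q)

open scoped Topology

/-! ### The step profile -/

/-- Centred logarithmic profile of a step: in the variable `u = s - sⱼ` a step of the comparison
function has logarithm `log 3 - kap u`, going from `2 log 3` down to `0`. -/
noncomputable def kap (u : ℝ) : ℝ := Real.log (1 + 3 * Real.exp u) - Real.log (3 + Real.exp u)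

/-- The derivative of `kap`. -/
noncomputable def kapD (u : ℝ) : ℝ :=
  3 * Real.exp u / (1 + 3 * Real.exp u) - Real.exp u / (3 + Real.exp u)

lemma kap_zero : kap 0 = 0 := by
  simp only [kap, Real.exp_zero]; norm_num

lemma kap_neg (u : ℝ) : kap (-u) = - kap u := by
  have h := Real.exp_pos u
  have h1 : 1 + 3 * Real.exp (-u) = (3 + Real.exp u) / Real.exp u := by
    rw [Real.exp_neg]; field_simp; ring
  have h2 : 3 + Real.exp (-u) = (1 + 3 * Real.exp u) / Real.exp u := by
    rw [Real.exp_neg]; field_simp; ring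
  unfold kap
  rw [h1, h2, Real.log_div (by positivity) (by positivity),
    Real.log_div (by positivity) (by positivity)]
  ring

lemma kap_le (u : ℝ) : kap u ≤ Real.log 3 := by
  have h := Real.exp_pos u
  unfold kap
  rw [sub_le_iff_le_add, ← Real.log_mul (by positivity) (by positivity)]
  apply Real.log_le_log (by positivity); linarith

lemma neg_le_kap (u : ℝ) : -Real.log 3 ≤ kap u := by
  have := kap_le (-u)
  rw [kap_neg] at this; linarith

lemma hasDerivAt_kap (u : ℝ) : HasDerivAt kap (kapD u) u := by
  have h := Real.exp_pos u
  have e := Real.hasDerivAt_exp u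
  exact ((e.const_mul 3).const_add 1 |>.log (by positivity)).sub
    ((e.const_add 3).log (by positivity))

lemma continuous_kap : Continuous kap :=
  continuous_iff_continuousAt.2 fun u => (hasDerivAt_kap u).continuousAt

lemma kapD_pos (u : ℝ) : 0 < kapD u := by
  have h := Real.exp_pos u
  have : kapD u = 8 * Real.exp u / ((1 + 3 * Real.exp u) * (3 + Real.exp u)) := by
    unfold kapD; field_simp; ring
  rw [this]; positivity

/-- The logarithmic slope of a step at its node is `-1/2`, the extreme slope allowed by
monotonicity of `R`; this is where the factor `9` comes from. -/
lemma kapD_zero : kapD 0 = 1 / 2 := by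
  simp only [kapD, Real.exp_zero]; norm_num

/-! ### The energy of a configuration of nodes -/

section energy
variable {m : ℕ} (φ : ℝ → ℝ)

/-- Logarithm of the ratio between the function `exp φ` and the product of the `m` steps centred at
the points `s j`, evaluated at `x`. -/
noncomputable def force (s : Fin m → ℝ) (x : ℝ) : ℝ :=
  φ x - m * Real.log 3 + ∑ j, kap (x - s j)

/-- Potential whose gradient at `s` has `i`-th component `force φ s (s i)`. The diagonal terms of the
double sum are integrals over `0..0` and vanish. -/
noncomputable def energy (s : Fin m → ℝ) : ℝ :=
  ∑ i, (∫ x in (0:ℝ)..s i, (φ x - m * Real.log 3)) +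
    (1 / 2) * ∑ i, ∑ j, ∫ x in (0:ℝ)..(s i - s j), kap x

lemma continuous_energy (hφ : Continuous φ) : Continuous (energy (m := m) φ) := by
  have h1 : Continuous fun y : ℝ => ∫ x in (0:ℝ)..y, (φ x - m * Real.log 3) :=
    intervalIntegral.continuous_primitive
      (fun a b => (hφ.sub continuous_const).intervalIntegrable a b) 0
  have h2 : Continuous fun y : ℝ => ∫ x in (0:ℝ)..y, kap x :=
    intervalIntegral.continuous_primitive (fun a b => continuous_kap.intervalIntegrable a b) 0
  unfold energy
  refine (continuous_finsetSum _ fun i _ => h1.comp (continuous_apply i)).add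
    (continuous_const.mul (continuous_finsetSum _ fun i _ => continuous_finsetSum _ fun j _ =>
      h2.comp ((continuous_apply i).sub (continuous_apply j))))

/-- Directional derivative of `energy`; oddness of `kap` merges the two halves of the pair
interaction. -/
lemma hasDerivAt_energy (hφ : Continuous φ) (s v : Fin m → ℝ) (δ : ℝ) :
    HasDerivAt (fun d : ℝ => energy φ (s + d • v))
      (∑ i, v i * force φ (s + δ • v) ((s + δ • v) i)) δ := by
  set w := s + δ • v with hw
  have hl (i : Fin m) : HasDerivAt (fun d : ℝ => (s + d • v) i) (v i) δ := by
    simpa using ((hasDerivAt_id δ).mul_const (v i)).const_add (s i)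
  have h1 (i : Fin m) : HasDerivAt (fun d : ℝ => ∫ x in (0:ℝ)..((s + d • v) i),
      (φ x - m * Real.log 3)) ((φ (w i) - m * Real.log 3) * v i) δ := by
    have hc : Continuous fun x => φ x - m * Real.log 3 := hφ.sub continuous_const
    exact (hc.integral_hasStrictDerivAt 0 (w i)).hasDerivAt.comp δ (hl i)
  have h2 (i j : Fin m) : HasDerivAt (fun d : ℝ => ∫ x in (0:ℝ)..((s + d • v) i - (s + d • v) j),
      kap x) (kap (w i - w j) * (v i - v j)) δ :=
    (continuous_kap.integral_hasStrictDerivAt 0 (w i - w j)).hasDerivAt.comp δ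
      (h := fun d : ℝ => (s + d • v) i - (s + d • v) j) ((hl i).sub (hl j))
  have h := (HasDerivAt.fun_sum fun i (_ : i ∈ Finset.univ) => h1 i).add
    ((HasDerivAt.fun_sum fun i (_ : i ∈ Finset.univ) =>
      HasDerivAt.fun_sum fun j (_ : j ∈ Finset.univ) => h2 i j).const_mul (1 / 2 : ℝ))
  refine h.congr_deriv ?_
  have hswap : ∑ i, ∑ j, kap (w i - w j) * v j = - ∑ i, ∑ j, kap (w i - w j) * v i := by
    rw [Finset.sum_comm, ← Finset.sum_neg_distrib]
    refine Finset.sum_congr rfl fun i _ => ?_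
    rw [← Finset.sum_neg_distrib]
    refine Finset.sum_congr rfl fun j _ => ?_
    rw [← neg_sub, kap_neg]; ring
  have : ∑ i, ∑ j, kap (w i - w j) * (v i - v j) = 2 * ∑ i, ∑ j, kap (w i - w j) * v i := by
    simp only [mul_sub, Finset.sum_sub_distrib]
    rw [hswap]; ring
  rw [this, ← mul_assoc]
  norm_num
  rw [← Finset.sum_add_distrib]
  refine Finset.sum_congr rfl fun i _ => ?_
  rw [← Finset.sum_mul]
  simp only [force]
  ring

end energy

/-! ### Existence of nodes and count of zeros -/

lemma eventually_right_of_deriv_pos {f : ℝ → ℝ} {f' x : ℝ} (h : HasDerivAt f f' x) (hf : 0 < f') :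
    ∀ᶠ y in 𝓝[>] x, f x < f y := by
  have := h.tendsto_slope.mono_left (nhdsWithin_mono x (fun y (hy : y ∈ Set.Ioi x) => ne_of_gt hy))
  filter_upwards [this.eventually (lt_mem_nhds hf), self_mem_nhdsWithin] with y hy hxy
  rw [slope_def_field] at hy
  have h2 : 0 < y - x := sub_pos.2 hxy
  have := (div_pos_iff_of_pos_right h2).1 hy
  linarith

lemma eventually_left_of_deriv_pos {f : ℝ → ℝ} {f' x : ℝ} (h : HasDerivAt f f' x) (hf : 0 < f') :
    ∀ᶠ y in 𝓝[<] x, f y < f x := by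
  have := h.tendsto_slope.mono_left (nhdsWithin_mono x (fun y (hy : y ∈ Set.Iio x) => ne_of_lt hy))
  filter_upwards [this.eventually (lt_mem_nhds hf), self_mem_nhdsWithin] with y hy hxy
  rw [slope_def_field] at hy
  have h2 : y - x < 0 := sub_neg.2 hxy
  rcases div_pos_iff.1 hy with h | h <;> linarith [h.1, h.2]

/-- A maximum point of `energy` on the box `[-L, L]^m` is an interior critical point with pairwise
distinct coordinates. -/
lemma exists_nodes {m : ℕ} {φ φ' : ℝ → ℝ} (hφ : ∀ x, HasDerivAt φ (φ' x) x)
    (hφ' : ∀ x, -(1 / 2) < φ' x) {L : ℝ} (hL : 0 ≤ L)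
    (hlo : 2 * m * Real.log 3 < φ (-L)) (hhi : φ L < 0) :
    ∃ s : Fin m → ℝ, Function.Injective s ∧ (∀ i, s i ∈ Set.Ioo (-L) L) ∧
      ∀ i, force φ s (s i) = 0 := by
  have hcont : Continuous φ := continuous_iff_continuousAt.2 fun u => (hφ u).continuousAt
  obtain ⟨s, hsmem, hmax⟩ := (isCompact_Icc (a := fun _ : Fin m => -L) (b := fun _ => L)).exists_isMaxOn
    ⟨fun _ => L, fun _ => by simp only; linarith, le_refl _⟩ (continuous_energy φ hcont).continuousOn
  have hs (i) : -L ≤ s i ∧ s i ≤ L := ⟨hsmem.1 i, hsmem.2 i⟩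
  have hsumle (x : ℝ) : ∑ j, kap (x - s j) ≤ m * Real.log 3 := by
    simpa using Finset.sum_le_card_nsmul Finset.univ (fun j => kap (x - s j)) _ fun j _ => kap_le _
  have hlesum (x : ℝ) : -(m * Real.log 3) ≤ ∑ j, kap (x - s j) := by
    simpa using Finset.card_nsmul_le_sum Finset.univ (fun j => kap (x - s j)) _
      fun j _ => neg_le_kap _
  have hFL (i) (h : s i = L) : force φ s (s i) < 0 := by
    have := hsumle L
    simp only [force, h]; linarith
  have hFL' (i) (h : s i = -L) : 0 < force φ s (s i) := by
    have := hlesum (-L)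
    simp only [force, h]; linarith
  have hbox (v : Fin m → ℝ) (h1 : ∀ i, 0 < v i → s i < L) (h2 : ∀ i, v i < 0 → -L < s i) :
      ∀ᶠ d in 𝓝[>] (0 : ℝ), s + d • v ∈ Set.Icc (fun _ : Fin m => -L) (fun _ => L) := by
    have : ∀ᶠ d in 𝓝[>] (0 : ℝ), ∀ i, -L ≤ s i + d * v i ∧ s i + d * v i ≤ L := by
      rw [Filter.eventually_all]
      intro i
      have hc : Filter.Tendsto (fun d : ℝ => s i + d * v i) (𝓝[>] 0) (𝓝 (s i)) := by
        have : Continuous fun d : ℝ => s i + d * v i := by fun_prop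
        simpa using (this.tendsto 0).mono_left nhdsWithin_le_nhds
      rcases lt_trichotomy (v i) 0 with h | h | h
      · filter_upwards [hc.eventually (lt_mem_nhds (h2 i h)), self_mem_nhdsWithin] with d hd hd0
        refine ⟨hd.le, ?_⟩
        nlinarith [hs i, mul_pos_of_neg_of_neg h (neg_neg_of_pos (show (0:ℝ) < d from hd0))]
      · simp [h, hs i]
      · filter_upwards [hc.eventually (gt_mem_nhds (h1 i h)), self_mem_nhdsWithin] with d hd hd0
        refine ⟨?_, hd.le⟩
        nlinarith [hs i, mul_pos h (show (0:ℝ) < d from hd0)]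
    filter_upwards [this] with d hd
    exact ⟨fun i => by simpa using (hd i).1, fun i => by simpa using (hd i).2⟩
  -- No direction pointing into the box increases the energy.
  have hno (v : Fin m → ℝ) (h1 : ∀ i, 0 < v i → s i < L) (h2 : ∀ i, v i < 0 → -L < s i)
      (h3 : ∀ᶠ d in 𝓝[>] (0 : ℝ), energy φ s < energy φ (s + d • v)) : False := by
    obtain ⟨d, hd1, hd2⟩ := ((hbox v h1 h2).and h3).exists
    exact absurd (hmax hd1) (not_le.2 hd2)
  have hcrit (i) : force φ s (s i) = 0 := by
    have key (ε : ℝ) (hε : 0 < ε * force φ s (s i)) (h1 : 0 < ε → s i < L)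
        (h2 : ε < 0 → -L < s i) : False := by
      refine hno (Pi.single i ε) (fun j hj => ?_) (fun j hj => ?_) ?_
      · by_cases hij : j = i
        · subst hij; exact h1 (by simpa using hj)
        · simp [hij] at hj
      · by_cases hij : j = i
        · subst hij; exact h2 (by simpa using hj)
        · simp [hij] at hj
      · have hd := hasDerivAt_energy φ hcont s (Pi.single i ε) 0
        have := eventually_right_of_deriv_pos hd (by
          simpa [Pi.single_apply] using hε)
        simpa using this
    rcases lt_trichotomy (force φ s (s i)) 0 with h | h | h
    · refine (key (-1) (by linarith) (fun h => by linarith) fun _ => ?_).elim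
      exact lt_of_le_of_ne (hs i).1 fun e => by linarith [hFL' i e.symm]
    · exact h
    · refine (key 1 (by linarith) (fun _ => ?_) fun h => by linarith).elim
      exact lt_of_le_of_ne (hs i).2 fun e => by linarith [hFL i e]
  have hIoo (i) : s i ∈ Set.Ioo (-L) L :=
    ⟨lt_of_le_of_ne (hs i).1 fun e => by linarith [hFL' i e.symm, hcrit i],
      lt_of_le_of_ne (hs i).2 fun e => by linarith [hFL i e, hcrit i]⟩
  refine ⟨s, fun i j hij => ?_, hIoo, hcrit⟩
  by_contra hne
  -- Pull the coinciding nodes `i` and `j` apart symmetrically; the first derivative of the energy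
  -- vanishes and the second is positive, since both `l = i` and `l = j` contribute `kapD 0 = 1/2`.
  set v : Fin m → ℝ := Pi.single i 1 - Pi.single j 1 with hv
  refine hno v (fun k _ => (hIoo k).2) (fun k _ => (hIoo k).1) ?_
  have hvi : v i = 1 := by simp [hv, hne]
  have hvj : v j = -1 := by simp [hv, Ne.symm hne]
  have hsum (f : Fin m → ℝ) : ∑ k, v k * f k = f i - f j := by
    simp [hv, sub_mul, Finset.sum_sub_distrib, Pi.single_apply]
  set D : ℝ → ℝ := fun d => force φ (s + d • v) ((s + d • v) i) -
    force φ (s + d • v) ((s + d • v) j) with hD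
  have hE (d : ℝ) : HasDerivAt (fun d : ℝ => energy φ (s + d • v)) (D d) d := by
    refine (hasDerivAt_energy φ hcont s v d).congr_deriv ?_
    exact hsum fun k => force φ (s + d • v) ((s + d • v) k)
  have hl (k : Fin m) : HasDerivAt (fun d : ℝ => (s + d • v) k) (v k) 0 := by
    simpa using ((hasDerivAt_id (0:ℝ)).mul_const (v k)).const_add (s k)
  have hforce (k : Fin m) : HasDerivAt (fun d : ℝ => force φ (s + d • v) ((s + d • v) k))
      (φ' (s k) * v k + ∑ l, kapD (s k - s l) * (v k - v l)) 0 := by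
    have e (k : Fin m) : (s + (0:ℝ) • v) k = s k := by simp
    have a1 := HasDerivAt.comp (0:ℝ) (by rw [e k]; exact hφ (s k)) (hl k)
    have a2 (l : Fin m) := HasDerivAt.comp (0:ℝ) (h₂ := kap)
      (h := fun d : ℝ => (s + d • v) k - (s + d • v) l)
      (by simp only [e]; exact hasDerivAt_kap (s k - s l)) ((hl k).sub (hl l))
    exact (a1.sub_const _).add (HasDerivAt.fun_sum fun l (_ : l ∈ Finset.univ) => a2 l)
  have hD0 : D 0 = 0 := by simp [hD, hij]
  have hDD : HasDerivAt D (2 * φ' (s i) + 2 * ∑ l, kapD (s i - s l)) 0 := by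
    refine ((hforce i).sub (hforce j)).congr_deriv ?_
    rw [← hij, hvi, hvj, Finset.mul_sum]
    have : ∑ l, 2 * kapD (s i - s l) = ∑ l, kapD (s i - s l) * (1 - v l) -
        ∑ l, kapD (s i - s l) * (-1 - v l) := by
      rw [← Finset.sum_sub_distrib]
      exact Finset.sum_congr rfl fun l _ => by ring
    rw [this]; ring
  have hpos : 0 < 2 * φ' (s i) + 2 * ∑ l, kapD (s i - s l) := by
    have h1 : ∑ l ∈ ({i, j} : Finset (Fin m)), kapD (s i - s l) ≤ ∑ l, kapD (s i - s l) :=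
      Finset.sum_le_sum_of_subset_of_nonneg (Finset.subset_univ _)
        fun l _ _ => (kapD_pos _).le
    rw [Finset.sum_pair hne, ← hij, sub_self, kapD_zero] at h1
    linarith [hφ' (s i)]
  have hDpos := eventually_right_of_deriv_pos hDD hpos
  rw [hD0] at hDpos
  obtain ⟨c, hc0, hc⟩ := (mem_nhdsGT_iff_exists_Ioo_subset).1 hDpos
  have hc0' : (0:ℝ) < c := hc0
  have hmono : StrictMonoOn (fun d : ℝ => energy φ (s + d • v)) (Set.Ico 0 c) := by
    refine strictMonoOn_of_deriv_pos (convex_Ico 0 c)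
      (fun d _ => (hE d).continuousAt.continuousWithinAt) fun d hd => ?_
    rw [interior_Ico] at hd
    rw [(hE d).deriv]
    exact hc hd
  filter_upwards [Ioo_mem_nhdsGT hc0'] with d hd
  simpa using hmono ⟨le_refl _, hc0'⟩ ⟨hd.1.le, hd.2⟩ hd.1

/-- A continuous function that is positive at `a`, negative just left of `e`, and crosses zero
upwards at each point of `T ⊆ (a, e)` has at least `2 |T| + 1` zeros below `e`. -/
lemma exists_zeros_of_upcrossings {H : ℝ → ℝ} (hH : Continuous H) {a : ℝ} (ha : 0 < H a)
    (T : Finset ℝ) : (∀ τ ∈ T, a < τ ∧ H τ = 0 ∧ (∀ᶠ y in 𝓝[<] τ, H y < 0) ∧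
      (∀ᶠ y in 𝓝[>] τ, 0 < H y)) → ∀ e, a < e → (∀ τ ∈ T, τ < e) →
      (∀ᶠ y in 𝓝[<] e, H y < 0) →
      ∃ Z : Finset ℝ, Z.card = 2 * T.card + 1 ∧ ∀ z ∈ Z, z < e ∧ H z = 0 := by
  -- A downcrossing between a point of positivity and a left neighbourhood of negativity.
  have ivt {x e : ℝ} (hx : 0 < H x) (hxe : x < e) (he : ∀ᶠ y in 𝓝[<] e, H y < 0) :
      ∃ z, x < z ∧ z < e ∧ H z = 0 := by
    obtain ⟨y, hy, hy1, hy2⟩ := (he.and (Ioo_mem_nhdsLT hxe)).exists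
    obtain ⟨z, hz, hz0⟩ := intermediate_value_Icc' hy1.le hH.continuousOn ⟨hy.le, hx.le⟩
    refine ⟨z, lt_of_le_of_ne hz.1 ?_, hz.2.trans_lt hy2, hz0⟩
    rintro rfl; linarith
  induction T using Finset.induction_on_max with
  | empty =>
    intro _ e hae _ he
    obtain ⟨z, _, h2, h3⟩ := ivt ha hae he
    exact ⟨{z}, by simp, by simp [h2, h3]⟩
  | insert τ T hτ ih =>
    intro hT e hae hTe he
    obtain ⟨h1, h2, h3, h4⟩ := hT τ (Finset.mem_insert_self _ _)
    have hτe := hTe τ (Finset.mem_insert_self _ _)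
    obtain ⟨Z, hZ, hZ'⟩ := ih (fun σ hσ => hT σ (Finset.mem_insert_of_mem hσ)) τ h1 hτ h3
    obtain ⟨y, hy, hy1, hy2⟩ := (h4.and (Ioo_mem_nhdsGT hτe)).exists
    obtain ⟨z, hz1, hz2, hz3⟩ := ivt hy hy2 he
    refine ⟨insert z (insert τ Z), ?_, ?_⟩
    · rw [Finset.card_insert_of_notMem, Finset.card_insert_of_notMem,
        Finset.card_insert_of_notMem, hZ]
      · ring
      · exact fun h => lt_irrefl _ (hτ τ h)
      · exact fun h => lt_irrefl _ (hZ' τ h).1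
      · simp only [Finset.mem_insert, not_or]
        exact ⟨by linarith, fun h => by linarith [(hZ' z h).1]⟩
    · intro w hw
      simp only [Finset.mem_insert] at hw
      rcases hw with rfl | rfl | hw
      · exact ⟨hz2, hz3⟩
      · exact ⟨hτe, h2⟩
      · exact ⟨(hZ' w hw).1.trans hτe, (hZ' w hw).2⟩

lemma exists_force_zeros {m : ℕ} {φ φ' : ℝ → ℝ} (hφ : ∀ x, HasDerivAt φ (φ' x) x)
    (hφ' : ∀ x, -(1 / 2) < φ' x) {L : ℝ} (hL : 0 ≤ L)
    (hlo : 2 * m * Real.log 3 < φ (-L)) (hhi : ∀ x, L ≤ x → φ x < 0) :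
    ∃ (s : Fin m → ℝ) (Z : Finset ℝ), Z.card = 2 * m + 1 ∧ (∀ z ∈ Z, force φ s z = 0) ∧
      force φ s L < 0 := by
  obtain ⟨s, hinj, hmem, hs⟩ := exists_nodes hφ hφ' hL hlo (hhi L le_rfl)
  have hsumle (x : ℝ) : ∑ j, kap (x - s j) ≤ m * Real.log 3 := by
    simpa using Finset.sum_le_card_nsmul Finset.univ (fun j => kap (x - s j)) _ fun j _ => kap_le _
  have hlesum (x : ℝ) : -(m * Real.log 3) ≤ ∑ j, kap (x - s j) := by
    simpa using Finset.card_nsmul_le_sum Finset.univ (fun j => kap (x - s j)) _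
      fun j _ => neg_le_kap _
  have hd (x : ℝ) : HasDerivAt (force φ s) (φ' x + ∑ j, kapD (x - s j)) x :=
    ((hφ x).sub_const _).add (HasDerivAt.fun_sum fun j (_ : j ∈ Finset.univ) =>
      (hasDerivAt_kap (x - s j)).comp_sub_const x (s j))
  have hcont : Continuous (force φ s) := continuous_iff_continuousAt.2 fun u => (hd u).continuousAt
  have hpos (i) : 0 < φ' (s i) + ∑ j, kapD (s i - s j) := by
    have := Finset.single_le_sum (f := fun j => kapD (s i - s j)) (fun l _ => (kapD_pos _).le)
      (Finset.mem_univ i)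
    simp only [sub_self, kapD_zero] at this
    linarith [hφ' (s i)]
  have hneg (x) (hx : L ≤ x) : force φ s x < 0 := by
    have := hsumle x
    have := hhi x hx
    simp only [force]; linarith
  obtain ⟨Z, hZ, hZ'⟩ := exists_zeros_of_upcrossings hcont (a := -L)
    (by have := hlesum (-L); simp only [force]; linarith) (Finset.univ.image s) (by
      intro τ hτ
      obtain ⟨i, _, rfl⟩ := Finset.mem_image.1 hτ
      have h1 := eventually_left_of_deriv_pos (hd (s i)) (hpos i)
      have h2 := eventually_right_of_deriv_pos (hd (s i)) (hpos i)
      rw [hs i] at h1 h2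
      exact ⟨(hmem i).1, hs i, h1, h2⟩) (L + 1) (by linarith) (by
      intro τ hτ
      obtain ⟨i, _, rfl⟩ := Finset.mem_image.1 hτ
      linarith [(hmem i).2]) (by
      filter_upwards [Ioo_mem_nhdsLT (show L < L + 1 by linarith)] with y hy
      exact hneg y hy.1.le)
  refine ⟨s, Z, ?_, fun z hz => (hZ' z hz).2, hneg L le_rfl⟩
  rw [hZ, Finset.card_image_of_injective _ hinj]; simp

/-! ### The logarithmic coordinate on the unit interval -/

/-- The point `x ∈ (0, 1)` with `log (x² / (1 - x²)) = s`. -/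
noncomputable def pos (s : ℝ) : ℝ := Real.sqrt (Real.exp s / (1 + Real.exp s))

lemma pos_sq (s : ℝ) : pos s ^ 2 = Real.exp s / (1 + Real.exp s) :=
  Real.sq_sqrt (by positivity)

lemma pos_pos (s : ℝ) : 0 < pos s := Real.sqrt_pos.2 (by positivity)

lemma one_sub_pos_sq (s : ℝ) : 1 - pos s ^ 2 = 1 / (1 + Real.exp s) := by
  have := Real.exp_pos s
  rw [pos_sq]; field_simp; ring

lemma pos_lt_one (s : ℝ) : pos s < 1 := by
  have h := one_sub_pos_sq s
  have h2 : 0 < 1 / (1 + Real.exp s) := by positivity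
  nlinarith [pos_pos s]

lemma pos_injective : Function.Injective pos := by
  intro a b h
  have h1 := one_sub_pos_sq a
  rw [h, one_sub_pos_sq b] at h1
  have ha := Real.exp_pos a
  have hb := Real.exp_pos b
  field_simp at h1
  exact Real.exp_injective (by linarith)

lemma hasDerivAt_pos (s : ℝ) : HasDerivAt pos (pos s * (1 - pos s ^ 2) / 2) s := by
  have h := Real.exp_pos s
  have e := Real.hasDerivAt_exp s
  have h1 := (e.fun_div (e.const_add 1) (by positivity)).sqrt (by positivity)
  refine h1.congr_deriv ?_
  change _ / (2 * pos s) = _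
  have hp := pos_pos s
  rw [div_eq_iff (by positivity)]
  have : pos s * (1 - pos s ^ 2) / 2 * (2 * pos s) = pos s ^ 2 * (1 - pos s ^ 2) := by ring
  rw [this, one_sub_pos_sq, pos_sq]
  field_simp
  ring

/-- Zero count for a polynomial vanishing at `0` and at `±x` for all `x ∈ W`. -/
lemma natDegree_lt_imp_zero {N : Polynomial ℝ} {W : Finset ℝ} (hW : ∀ x ∈ W, 0 < x)
    (h0 : N.eval 0 = 0) (h1 : ∀ x ∈ W, N.eval x = 0) (h2 : ∀ x ∈ W, N.eval (-x) = 0)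
    (hdeg : N.natDegree < 2 * W.card + 1) : N = 0 := by
  refine Polynomial.eq_zero_of_natDegree_lt_card_of_eval_eq_zero' N
    (insert 0 (W ∪ W.image (fun x => -x))) ?_ ?_
  · intro x hx
    simp only [Finset.mem_insert, Finset.mem_union, Finset.mem_image] at hx
    rcases hx with rfl | hx | ⟨y, hy, rfl⟩
    · exact h0
    · exact h1 x hx
    · exact h2 y hy
  · rw [Finset.card_insert_of_notMem, Finset.card_union_of_disjoint,
      Finset.card_image_of_injective _ neg_injective]
    · omega
    · rw [Finset.disjoint_left]
      intro x hx hx'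
      obtain ⟨y, hy, rfl⟩ := Finset.mem_image.1 hx'
      linarith [hW _ hx, hW _ hy]
    · intro hx
      simp only [Finset.mem_union, Finset.mem_image] at hx
      rcases hx with hx | ⟨y, hy, h⟩
      · exact lt_irrefl _ (hW _ hx)
      · linarith [hW _ hy]

/-! ### The comparison function -/

section comparison
open Polynomial
variable {m : ℕ} (s : Fin m → ℝ)

/-- Denominator of the comparison function with nodes `s`, an even polynomial. Each factor equals
`η (1 - x²) + 3 x²` with `η = exp (s j)`. -/
noncomputable def cmpDen : ℝ[X] :=
  (1 + 3 * X ^ 2) * ∏ j, (C (Real.exp (s j)) + C (3 - Real.exp (s j)) * X ^ 2)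

/-- Numerator of the comparison function with nodes `s` and value `c` at `1`, an odd polynomial.
Each factor of the product equals `9 η (1 - x²) + 3 x²` with `η = exp (s j)`. -/
noncomputable def cmpNum (c : ℝ) : ℝ[X] :=
  C (4 * c) * X * ∏ j, (C (9 * Real.exp (s j)) + C (3 - 9 * Real.exp (s j)) * X ^ 2)

lemma natDegree_prod_quad_le (a b : Fin m → ℝ) :
    (∏ j, (C (a j) + C (b j) * X ^ 2) : ℝ[X]).natDegree ≤ 2 * m := by
  refine (natDegree_prod_le _ _).trans ?_
  refine (Finset.sum_le_card_nsmul Finset.univ _ 2 fun j _ => ?_).trans (by simp [mul_comm])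
  compute_degree

lemma natDegree_cmpDen_le : (cmpDen s).natDegree ≤ 2 * m + 2 := by
  refine natDegree_mul_le.trans ?_
  have h1 : (1 + 3 * X ^ 2 : ℝ[X]).natDegree ≤ 2 := by compute_degree
  have h2 := natDegree_prod_quad_le (fun j => Real.exp (s j)) (fun j => 3 - Real.exp (s j))
  omega

lemma natDegree_cmpNum_le (c : ℝ) : (cmpNum s c).natDegree ≤ 2 * m + 2 := by
  refine natDegree_mul_le.trans ?_
  have h1 : (C (4 * c) * X : ℝ[X]).natDegree ≤ 1 := by compute_degree
  have h2 := natDegree_prod_quad_le (fun j => 9 * Real.exp (s j)) (fun j => 3 - 9 * Real.exp (s j))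
  omega

lemma eval_cmpDen (x : ℝ) : (cmpDen s).eval x =
    (1 + 3 * x ^ 2) * ∏ j, (Real.exp (s j) + (3 - Real.exp (s j)) * x ^ 2) := by
  simp [cmpDen, eval_prod]

lemma eval_cmpNum (c x : ℝ) : (cmpNum s c).eval x =
    4 * c * x * ∏ j, (9 * Real.exp (s j) + (3 - 9 * Real.exp (s j)) * x ^ 2) := by
  simp [cmpNum, eval_prod]

/-- For `φ = log (r (1 + 3x²) / (4 c x))`, the function `force` is the logarithm of the ratio of `r`
to the comparison function. -/
lemma exp_force {φ : ℝ → ℝ} {z r c : ℝ} (hr : 0 < r) (hc : 0 < c)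
    (hφ : φ z = Real.log r - Real.log (pos z) + Real.log (1 + 3 * pos z ^ 2) - Real.log (4 * c)) :
    force φ s z = Real.log (r * (cmpDen s).eval (pos z)) - Real.log ((cmpNum s c).eval (pos z)) ∧
      0 < (cmpDen s).eval (pos z) ∧ 0 < (cmpNum s c).eval (pos z) := by
  have hx := pos_pos z
  have hy := Real.exp_pos z
  have hA (j) : Real.exp (s j) + (3 - Real.exp (s j)) * pos z ^ 2 =
      (Real.exp (s j) + 3 * Real.exp z) / (1 + Real.exp z) := by
    rw [pos_sq]; field_simp; ring
  have hB (j) : 9 * Real.exp (s j) + (3 - 9 * Real.exp (s j)) * pos z ^ 2 =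
      (9 * Real.exp (s j) + 3 * Real.exp z) / (1 + Real.exp z) := by
    rw [pos_sq]; field_simp; ring
  have hA0 (j) : 0 < Real.exp (s j) + (3 - Real.exp (s j)) * pos z ^ 2 := by
    rw [hA]; positivity
  have hB0 (j) : 0 < 9 * Real.exp (s j) + (3 - 9 * Real.exp (s j)) * pos z ^ 2 := by
    rw [hB]; positivity
  have hPA := Finset.prod_pos fun j (_ : j ∈ Finset.univ) => hA0 j
  have hPB := Finset.prod_pos fun j (_ : j ∈ Finset.univ) => hB0 j
  have hk (j) : kap (z - s j) = Real.log 3 +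
      (Real.log (Real.exp (s j) + (3 - Real.exp (s j)) * pos z ^ 2) -
        Real.log (9 * Real.exp (s j) + (3 - 9 * Real.exp (s j)) * pos z ^ 2)) := by
    have hs := Real.exp_pos (s j)
    rw [← Real.log_div (hA0 j).ne' (hB0 j).ne',
      ← Real.log_mul (by norm_num) (div_pos (hA0 j) (hB0 j)).ne', hA, hB, kap, Real.exp_sub,
      ← Real.log_div (by positivity) (by positivity)]
    congr 1
    field_simp
    ring
  refine ⟨?_, ?_, ?_⟩
  · rw [eval_cmpDen, eval_cmpNum, Real.log_mul hr.ne' (by positivity),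
      Real.log_mul (by positivity) hPA.ne', Real.log_mul (by positivity) hPB.ne',
      Real.log_mul (by positivity) hx.ne', Real.log_prod (fun j _ => (hA0 j).ne'),
      Real.log_prod (fun j _ => (hB0 j).ne'), force, hφ]
    simp only [hk, Finset.sum_add_distrib, Finset.sum_sub_distrib]
    simp
    ring
  · rw [eval_cmpDen]; positivity
  · rw [eval_cmpNum]; positivity

end comparison

/-! ### The inequality -/

/-- If `R ∈ Q_{2n}` is odd and increasing on `[-1,1]`, then
`R'(0) ≤ (1/2) · 9^n · R(1)`. -/
theorem bernstein_odd_increasing (n : ℕ) (hn : 0 < n) (R : ℝ → ℝ)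
    (hQ : QMem (2 * n) R)
    (hodd : ∀ x ∈ Set.Icc (-1:ℝ) 1, R (-x) = - R x)
    (hmono : MonotoneOn R (Set.Icc (-1:ℝ) 1)) :
    derivWithin R (Set.Icc (-1:ℝ) 1) 0 ≤ (1/2) * 9 ^ n * R 1 := by
  obtain ⟨p, q, hp, hq, hq0, hR⟩ := hQ
  obtain ⟨m, rfl⟩ : ∃ m, n = m + 1 := ⟨n - 1, by omega⟩
  by_contra! hcon
  have h0 : (0:ℝ) ∈ Set.Icc (-1:ℝ) 1 := by norm_num
  have h1 : (1:ℝ) ∈ Set.Icc (-1:ℝ) 1 := by norm_num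
  have hR0 : R 0 = 0 := by
    have := hodd 0 h0
    rw [neg_zero] at this; linarith
  have hR1 : 0 ≤ R 1 := hR0 ▸ hmono h0 h1 zero_le_one
  set c := (1/2) * 9 ^ (m + 1) * R 1 with hc
  have hc0 : 0 ≤ c := by positivity
  -- `R` is differentiable at interior points, with nonnegative derivative.
  have hder (x : ℝ) (hx : x ∈ Set.Ioo (-1:ℝ) 1) :
      HasDerivAt R (derivWithin R (Set.Icc (-1:ℝ) 1) x) x := by
    have hnhds : Set.Icc (-1:ℝ) 1 ∈ 𝓝 x := Icc_mem_nhds hx.1 hx.2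
    have hr : DifferentiableAt ℝ (fun x => p.eval x / q.eval x) x :=
      p.differentiableAt.fun_div q.differentiableAt (hq0 x ⟨hx.1.le, hx.2.le⟩)
    have : DifferentiableAt ℝ R x := hr.congr_of_eventuallyEq
      (Filter.eventually_of_mem hnhds fun y hy => hR y hy)
    rw [derivWithin_of_mem_nhds hnhds]
    exact this.hasDerivAt
  have hder0 (x : ℝ) : 0 ≤ derivWithin R (Set.Icc (-1:ℝ) 1) x := hmono.derivWithin_nonneg
  -- The slope assumption makes `R` lie above the line of slope `c` near `0`.
  obtain ⟨ε, hε, hεR⟩ : ∃ ε > 0, ∀ x ∈ Set.Ioo (0:ℝ) ε, c * x < R x := by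
    have h2 : HasDerivAt (fun x => R x - c * x) _ 0 :=
      (hder 0 (by norm_num)).fun_sub ((hasDerivAt_id (0:ℝ)).const_mul c)
    have h3 := eventually_right_of_deriv_pos h2 (by linarith)
    obtain ⟨ε, hε, h⟩ := mem_nhdsGT_iff_exists_Ioo_subset.1 h3
    refine ⟨ε, hε, fun x hx => ?_⟩
    have := h hx
    simp only [Set.mem_ofPred_eq, hR0, mul_zero, sub_zero] at this
    linarith
  have hRpos (x : ℝ) (hx0 : 0 < x) (hx1 : x ≤ 1) : 0 < R x := by
    have hx' : 0 < min x (ε / 2) := by positivity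
    have h2 := hεR (min x (ε / 2)) ⟨hx', (min_le_right _ _).trans_lt (by linarith)⟩
    have h3 : R (min x (ε / 2)) ≤ R x := hmono
      ⟨by linarith, (min_le_left _ _).trans hx1⟩ ⟨by linarith, hx1⟩ (min_le_left _ _)
    have : 0 ≤ c * min x (ε / 2) := by positivity
    linarith
  have hR1' : 0 < R 1 := hRpos 1 one_pos le_rfl
  have hposmem (s : ℝ) : pos s ∈ Set.Icc (-1:ℝ) 1 :=
    ⟨by linarith [pos_pos s], (pos_lt_one s).le⟩
  have hRp (s : ℝ) : 0 < R (pos s) := hRpos _ (pos_pos s) (pos_lt_one s).le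
  set φ : ℝ → ℝ := fun s => Real.log (R (pos s)) - Real.log (pos s) +
    Real.log (1 + 3 * pos s ^ 2) - Real.log (4 * R 1) with hφ
  have hφd (s : ℝ) : ∃ d, HasDerivAt φ d s ∧ -(1 / 2) < d := by
    have hx := pos_pos s
    have hx1 := pos_lt_one s
    have hP := hasDerivAt_pos s
    have hRc := (hder (pos s) ⟨by linarith, hx1⟩).comp s hP
    have e := (((hRc.log (hRp s).ne').sub (hP.log hx.ne')).add
      ((((hP.fun_pow 2).const_mul 3).const_add 1).log (by positivity))).sub_const
        (Real.log (4 * R 1))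
    refine ⟨_, e, ?_⟩
    have hu : 0 < 1 - pos s ^ 2 := by nlinarith
    -- Only the term from `-log x` is negative, and it contributes `-(1 - x²) / 2`.
    have t1 : 0 ≤ derivWithin R (Set.Icc (-1:ℝ) 1) (pos s) * (pos s * (1 - pos s ^ 2) / 2) /
        (R ∘ pos) s :=
      div_nonneg (mul_nonneg (hder0 _) (by positivity)) (hRp s).le
    have t2 : pos s * (1 - pos s ^ 2) / 2 / pos s < 1 / 2 := by
      have : pos s * (1 - pos s ^ 2) / 2 / pos s = (1 - pos s ^ 2) / 2 := by field_simp
      rw [this]; nlinarith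
    have t3 : 0 ≤ 3 * (((2:ℕ):ℝ) * pos s ^ (2 - 1) * (pos s * (1 - pos s ^ 2) / 2)) /
        (1 + 3 * pos s ^ 2) := by positivity
    linarith
  choose φ' hφ1 hφ2 using hφd
  -- This choice guarantees `pos (-L) < ε`.
  set L : ℝ := 1 / ε ^ 2 with hL
  have hL0 : 0 ≤ L := by positivity
  -- Uses `(1/2) * 9 ^ (m + 1) ≥ 4 * 9 ^ m`.
  have hlo : 2 * m * Real.log 3 < φ (-L) := by
    have hx := pos_pos (-L)
    have hxε : pos (-L) < ε := by
      have h2 : Real.exp (-L) < ε ^ 2 := by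
        have h3 := Real.add_one_le_exp L
        rw [Real.exp_neg, inv_lt_comm₀ (Real.exp_pos _) (by positivity)]
        rw [hL, one_div] at h3 ⊢
        linarith
      have h3 : pos (-L) ^ 2 ≤ Real.exp (-L) := by
        rw [pos_sq]
        exact div_le_self (Real.exp_pos _).le (by linarith [Real.exp_pos (-L)])
      exact lt_of_pow_lt_pow_left₀ 2 hε.le (h3.trans_lt h2)
    have h2 := hεR _ ⟨hx, hxε⟩
    have e : 2 * m * Real.log 3 = Real.log (9 ^ m) := by
      rw [show (9:ℝ) = 3 ^ 2 by norm_num, ← pow_mul, Real.log_pow]; push_cast; ring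
    have h3 : Real.log (9 ^ m) + Real.log (pos (-L)) + Real.log (4 * R 1) <
        Real.log (R (pos (-L))) := by
      rw [← Real.log_mul (by positivity) (by positivity),
        ← Real.log_mul (by positivity) (by positivity)]
      refine Real.log_lt_log (by positivity) (lt_of_le_of_lt ?_ h2)
      rw [hc, pow_succ]
      have : 0 ≤ 9 ^ m * pos (-L) * R 1 := by positivity
      nlinarith
    have h4 : 0 ≤ Real.log (1 + 3 * pos (-L) ^ 2) := Real.log_nonneg (by nlinarith)
    simp only [hφ]
    linarith
  have hhi (x : ℝ) (hx : L ≤ x) : φ x < 0 := by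
    have hp0 := pos_pos x
    have hp1 := pos_lt_one x
    -- For `x ∈ (1/3, 1)` one has `4x / (1 + 3x²) > 1`.
    have h2 : 1 / 3 < pos x := by
      have h3 := one_sub_pos_sq x
      have h4 : 1 / (1 + Real.exp x) ≤ 1 / 2 := by
        apply one_div_le_one_div_of_le (by norm_num)
        linarith [Real.one_le_exp (hL0.trans hx)]
      nlinarith
    have h3 : R (pos x) ≤ R 1 := hmono (hposmem x) h1 hp1.le
    have h4 : Real.log (R (pos x)) + Real.log (1 + 3 * pos x ^ 2) <
        Real.log (pos x) + Real.log (4 * R 1) := by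
      rw [← Real.log_mul (hRp x).ne' (by positivity), ← Real.log_mul (by positivity) (by positivity)]
      refine Real.log_lt_log (mul_pos (hRp x) (by positivity)) ?_
      have h5 : 1 + 3 * pos x ^ 2 < 4 * pos x := by nlinarith
      calc R (pos x) * (1 + 3 * pos x ^ 2) ≤ R 1 * (1 + 3 * pos x ^ 2) := by gcongr
        _ < R 1 * (4 * pos x) := by gcongr
        _ = pos x * (4 * R 1) := by ring
    simp only [hφ]
    linarith
  obtain ⟨s, Z, hZ, hZ0, hsL⟩ := exists_force_zeros hφ1 hφ2 hL0 hlo hhi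
  set N : Polynomial ℝ := p * cmpDen s - cmpNum s (R 1) * q with hN
  have hNe (x : ℝ) (hx : x ∈ Set.Icc (-1:ℝ) 1) :
      N.eval x = q.eval x * (R x * (cmpDen s).eval x - (cmpNum s (R 1)).eval x) := by
    have := hq0 x hx
    rw [hN, hR x hx]
    simp only [Polynomial.eval_sub, Polynomial.eval_mul]
    field_simp
  have hDeven (x : ℝ) : (cmpDen s).eval (-x) = (cmpDen s).eval x := by
    simp [eval_cmpDen]
  have hNodd (x : ℝ) : (cmpNum s (R 1)).eval (-x) = -(cmpNum s (R 1)).eval x := by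
    simp [eval_cmpNum]
  have hforce (z : ℝ) := exp_force s (φ := φ) (z := z) (hRp z) hR1' rfl
  have hW (x : ℝ) (hx : x ∈ insert 1 (Z.image pos)) : (0 < x ∧ x ≤ 1) ∧
      R x * (cmpDen s).eval x = (cmpNum s (R 1)).eval x := by
    rcases Finset.mem_insert.1 hx with rfl | hx
    · refine ⟨by norm_num, ?_⟩
      rw [eval_cmpDen, eval_cmpNum]
      simp
      ring
    · obtain ⟨z, hz, rfl⟩ := Finset.mem_image.1 hx
      obtain ⟨e1, e2, e3⟩ := hforce z
      rw [hZ0 z hz] at e1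
      exact ⟨⟨pos_pos z, (pos_lt_one z).le⟩,
        Real.log_injOn_pos (mul_pos (hRp z) e2) e3 (by linarith)⟩
  have hNz : N = 0 := by
    refine natDegree_lt_imp_zero (W := insert 1 (Z.image pos)) (fun x hx => (hW x hx).1.1) ?_ ?_ ?_ ?_
    · rw [hNe 0 h0, hR0, eval_cmpNum]; simp
    · intro x hx
      obtain ⟨⟨a, b⟩, e⟩ := hW x hx
      rw [hNe x ⟨by linarith, b⟩, e, sub_self, mul_zero]
    · intro x hx
      obtain ⟨⟨a, b⟩, e⟩ := hW x hx
      rw [hNe (-x) ⟨by linarith, by linarith⟩, hodd x ⟨by linarith, b⟩, hDeven, hNodd, neg_mul, e,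
        sub_self, mul_zero]
    · rw [Finset.card_insert_of_notMem, Finset.card_image_of_injective _ pos_injective, hZ]
      · have d1 := natDegree_cmpDen_le s
        have d2 := natDegree_cmpNum_le s (R 1)
        have : N.natDegree ≤ 4 * m + 4 := by
          refine (Polynomial.natDegree_sub_le _ _).trans (max_le ?_ ?_) <;>
            refine Polynomial.natDegree_mul_le.trans ?_ <;> omega
        omega
      · intro hx
        obtain ⟨z, _, hz⟩ := Finset.mem_image.1 hx
        linarith [pos_lt_one z]
  have hNL := hNe (pos L) (hposmem L)
  rw [hNz, Polynomial.eval_zero] at hNL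
  obtain ⟨e1, e2, e3⟩ := hforce L
  rcases mul_eq_zero.1 hNL.symm with h | h
  · exact hq0 _ (hposmem L) h
  · rw [sub_eq_zero.1 h, sub_self] at e1
    linarith
end

section
/- For each positive integer n, sup_R ( R'(0) / ‖R‖ ) ≥ 9^{n−1}, where the supremum is taken over all odd functions R ∈ Q_{2n−1} with R'(x) > 0 for all x ∈ [−1,1] and R not identically zero. -/
/-- The uniform (supremum) norm on `C[-1,1]`. -/
noncomputable def supNorm (R : ℝ → ℝ) : ℝ := sSup ((fun x => |R x|) '' Set.Icc (-1:ℝ) 1)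

section

open Polynomial

/-! ### Chaining estimates across a finite set of exceptional scales -/

/-- If `g` loses at most a factor `κ` over ranges `[y, z]` with `z ≤ 9 y`, and over ranges avoiding
every scale in `S` by a factor `2`, then it loses at most `κ ^ 3 ^ |S|` over any range. An
exceptional scale `r` is removed from `S` by cutting `[y, z]` at `r / 3` and `3 r`, at the cost of
replacing `κ` by `κ ^ 3`. -/
lemma chain_bound (N : ℕ) : ∀ κ : ℝ, 0 < κ → κ ≤ 1 → ∀ (S : Multiset ℝ) (g : ℝ → ℝ),
    Multiset.card S = N → (∀ y, 0 < y → y ≤ 1 → 0 < g y) →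
    (∀ y z, 0 < y → y ≤ z → z ≤ 1 → z ≤ 9 * y → κ * g y ≤ g z) →
    (∀ y z, 0 < y → y ≤ z → z ≤ 1 → (∀ r ∈ S, r < y / 2 ∨ 2 * z < r) → κ * g y ≤ g z) →
    ∀ y z, 0 < y → y ≤ z → z ≤ 1 → κ ^ (3 ^ N) * g y ≤ g z := by
  induction N with
  | zero =>
    intro κ hκ hκ1 S g hS hg hA hB y z hy hyz hz
    rw [Multiset.card_eq_zero] at hS
    subst hS
    simpa using hB y z hy hyz hz (by simp)
  | succ N ih =>
    intro κ hκ hκ1 S g hS hg hA hB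
    obtain ⟨r, hrS⟩ := Multiset.card_pos_iff_exists_mem.1 (by omega : 0 < Multiset.card S)
    obtain ⟨S', rfl⟩ := Multiset.exists_cons_of_mem hrS
    have hS' : Multiset.card S' = N := by simpa using hS
    have hk3 : κ ^ 3 ≤ κ := by
      simpa using pow_le_pow_of_le_one hκ.le hκ1 (show 1 ≤ 3 by norm_num)
    have key := ih (κ ^ 3) (by positivity) (pow_le_one₀ hκ.le hκ1) S' g hS' hg ?_ ?_
    · rw [pow_succ' 3 N, pow_mul]
      exact key
    · intro y z hy hyz hz h9
      exact (mul_le_mul_of_nonneg_right hk3 (hg y hy (hyz.trans hz)).le).trans (hA y z hy hyz hz h9)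
    · intro y z hy hyz hz hr
      by_cases hcase : r < y / 2 ∨ 2 * z < r
      · refine (mul_le_mul_of_nonneg_right hk3 (hg y hy (hyz.trans hz)).le).trans
          (hB y z hy hyz hz ?_)
        intro s hs
        rcases Multiset.mem_cons.1 hs with rfl | hs
        · exact hcase
        · exact hr s hs
      · push Not at hcase
        -- `a` and `b` are `r / 3` and `3 r`, clamped to `[y, z]`.
        obtain ⟨a, ha1, ha2, ha3⟩ : ∃ a, y ≤ a ∧ (a = y ∨ 2 * a < r) ∧ (r / 3 ≤ a ∧ a ≤ max y (r / 3)) := by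
          refine ⟨max y (r / 3), le_max_left _ _, ?_, le_max_right _ _, le_rfl⟩
          rcases le_total y (r / 3) with h | h
          · right; rw [max_eq_right h]; linarith
          · left; exact max_eq_left h
        obtain ⟨b, hb1, hb2, hb3⟩ : ∃ b, b ≤ z ∧ (b = z ∨ r < b / 2) ∧ (b ≤ 3 * r ∧ min z (3 * r) ≤ b) := by
          refine ⟨min z (3 * r), min_le_left _ _, ?_, min_le_right _ _, le_rfl⟩
          rcases le_total z (3 * r) with h | h
          · left; exact min_eq_left h
          · right; rw [min_eq_right h]; linarith
        have hab : a ≤ b := by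
          refine ha3.2.trans (le_trans ?_ hb3.2)
          refine max_le (le_min hyz ?_) (le_min ?_ ?_) <;> linarith
        have ha0 : 0 < a := by linarith
        have hgy := hg y hy (by linarith)
        have h1 : κ * g y ≤ g a := by
          rcases ha2 with rfl | h
          · nlinarith
          · refine hB y a hy ha1 (by linarith) ?_
            intro s hs
            rcases Multiset.mem_cons.1 hs with rfl | hs
            · exact Or.inr h
            · rcases hr s hs with h | h
              · exact Or.inl h
              · right; linarith
        have h2 : κ * g a ≤ g b := hA a b ha0 hab (by linarith) (by linarith)
        have h3 : κ * g b ≤ g z := by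
          rcases hb2 with rfl | h
          · have := hg b (by linarith) hz
            nlinarith
          · refine hB b z (by linarith) hb1 hz ?_
            intro s hs
            rcases Multiset.mem_cons.1 hs with rfl | hs
            · exact Or.inl h
            · rcases hr s hs with h | h
              · left; linarith
              · exact Or.inr h
        calc κ ^ 3 * g y = κ * (κ * (κ * g y)) := by ring
          _ ≤ κ * (κ * g a) := by gcongr
          _ ≤ κ * g b := by gcongr
          _ ≤ g z := h3

/-! ### Size of a real polynomial away from the moduli of its zeros -/

/-- The exponent `k` counts the points `w` with `‖w‖ < y / 2`: for these `‖x - w‖` is comparable to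
`x` on `[y, z]`, and for the remaining ones it is comparable to the constant `‖w‖`. -/
lemma prod_norm_bound (s : Multiset ℂ) (y z : ℝ) (hy : 0 < y) (hyz : y ≤ z)
    (hs : ∀ w ∈ s, ‖w‖ < y / 2 ∨ 2 * z < ‖w‖) :
    ∃ k : ℕ, (z / y) ^ k * (s.map fun w => ‖(y : ℂ) - w‖).prod
        ≤ 3 ^ Multiset.card s * (s.map fun w => ‖(z : ℂ) - w‖).prod ∧
      (s.map fun w => ‖(z : ℂ) - w‖).prod
        ≤ 3 ^ Multiset.card s * ((z / y) ^ k * (s.map fun w => ‖(y : ℂ) - w‖).prod) := by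
  induction s using Multiset.induction with
  | empty => exact ⟨0, by simp⟩
  | cons w s ih =>
    obtain ⟨k, h1, h2⟩ := ih fun v hv => hs v (Multiset.mem_cons_of_mem hv)
    have hz : 0 < z := hy.trans_le hyz
    set A := (s.map fun w => ‖(y : ℂ) - w‖).prod with hA
    set B := (s.map fun w => ‖(z : ℂ) - w‖).prod with hB
    have hA0 : 0 ≤ A := Multiset.prod_nonneg (by simp only [Multiset.mem_map]; rintro _ ⟨_, _, rfl⟩; positivity)
    have hB0 : 0 ≤ B := Multiset.prod_nonneg (by simp only [Multiset.mem_map]; rintro _ ⟨_, _, rfl⟩; positivity)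
    have ny : ‖(y : ℂ)‖ = y := by simp [abs_of_pos hy]
    have nz : ‖(z : ℂ)‖ = z := by simp [abs_of_pos hz]
    have u1 := norm_sub_le (y : ℂ) w
    have u2 := norm_sub_le (z : ℂ) w
    have l1 := abs_norm_sub_norm_le (y : ℂ) w
    have l2 := abs_norm_sub_norm_le (z : ℂ) w
    rw [abs_le] at l1 l2
    rw [ny] at u1 l1
    rw [nz] at u2 l2
    simp only [Multiset.map_cons, Multiset.prod_cons, Multiset.card_cons, ← hA, ← hB]
    have w0 := norm_nonneg w
    rcases hs w (Multiset.mem_cons_self _ _) with hw | hw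
    · have e1 : (z / y) * ‖(y : ℂ) - w‖ ≤ 3 * ‖(z : ℂ) - w‖ := by
        rw [div_mul_eq_mul_div, div_le_iff₀ hy]
        nlinarith
      have e2 : ‖(z : ℂ) - w‖ ≤ 3 * ((z / y) * ‖(y : ℂ) - w‖) := by
        rw [div_mul_eq_mul_div, mul_div_assoc', le_div_iff₀ hy]
        nlinarith
      refine ⟨k + 1, ?_, ?_⟩
      · calc (z / y) ^ (k + 1) * (‖(y : ℂ) - w‖ * A)
            = ((z / y) * ‖(y : ℂ) - w‖) * ((z / y) ^ k * A) := by ring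
          _ ≤ (3 * ‖(z : ℂ) - w‖) * (3 ^ Multiset.card s * B) := by gcongr
          _ = _ := by ring
      · calc ‖(z : ℂ) - w‖ * B
            ≤ (3 * ((z / y) * ‖(y : ℂ) - w‖)) * (3 ^ Multiset.card s * ((z / y) ^ k * A)) := by gcongr
          _ = _ := by ring
    · have e1 : ‖(y : ℂ) - w‖ ≤ 3 * ‖(z : ℂ) - w‖ := by linarith
      have e2 : ‖(z : ℂ) - w‖ ≤ 3 * ‖(y : ℂ) - w‖ := by linarith
      refine ⟨k, ?_, ?_⟩
      · calc (z / y) ^ k * (‖(y : ℂ) - w‖ * A)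
            = ‖(y : ℂ) - w‖ * ((z / y) ^ k * A) := by ring
          _ ≤ (3 * ‖(z : ℂ) - w‖) * (3 ^ Multiset.card s * B) := by gcongr
          _ = _ := by ring
      · calc ‖(z : ℂ) - w‖ * B
            ≤ (3 * ‖(y : ℂ) - w‖) * (3 ^ Multiset.card s * ((z / y) ^ k * A)) := by gcongr
          _ = _ := by ring

lemma abs_eval_eq (P : ℝ[X]) (x : ℝ) :
    |P.eval x| = |P.leadingCoeff| *
      (((P.map (algebraMap ℝ ℂ)).roots).map fun w => ‖(x : ℂ) - w‖).prod := by
  have h := (IsAlgClosed.splits (P.map (algebraMap ℝ ℂ))).eval_eq_prod_roots (x : ℂ)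
  have h2 : (P.map (algebraMap ℝ ℂ)).eval (x : ℂ) = ((P.eval x : ℝ) : ℂ) := by
    simpa using Polynomial.eval_map_apply (f := algebraMap ℝ ℂ) (p := P) x
  rw [h2] at h
  have h3 := congrArg norm h
  rw [Complex.norm_real, norm_mul, Real.norm_eq_abs] at h3
  rw [h3, Polynomial.leadingCoeff_map]
  rw [← normHom_apply (Multiset.prod _), map_multiset_prod, Multiset.map_map]
  simp

/-- Away from the moduli of its complex zeros, a real polynomial behaves like a monomial, up to a
constant depending only on the degree. -/
lemma eval_ratio_bound (P : ℝ[X]) (d : ℕ) (hd : P.natDegree ≤ d) (y z : ℝ) (hy : 0 < y) (hyz : y ≤ z)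
    (hs : ∀ w ∈ (P.map (algebraMap ℝ ℂ)).roots, ‖w‖ < y / 2 ∨ 2 * z < ‖w‖) :
    ∃ k : ℕ, (z / y) ^ k * |P.eval y| ≤ 3 ^ d * |P.eval z| ∧
      |P.eval z| ≤ 3 ^ d * ((z / y) ^ k * |P.eval y|) := by
  obtain ⟨k, h1, h2⟩ := prod_norm_bound _ y z hy hyz hs
  have hcard : Multiset.card (P.map (algebraMap ℝ ℂ)).roots ≤ d :=
    (Polynomial.card_roots' _).trans ((Polynomial.natDegree_map_le).trans hd)
  have hpow : (3 : ℝ) ^ Multiset.card (P.map (algebraMap ℝ ℂ)).roots ≤ 3 ^ d :=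
    pow_le_pow_right₀ (by norm_num) hcard
  have hpos : ∀ x : ℝ, 0 ≤ (((P.map (algebraMap ℝ ℂ)).roots).map fun w => ‖(x : ℂ) - w‖).prod :=
    fun x => Multiset.prod_nonneg (by simp only [Multiset.mem_map]; rintro _ ⟨_, _, rfl⟩; positivity)
  have hz : 0 < z := hy.trans_le hyz
  have hl := abs_nonneg P.leadingCoeff
  have h1' := mul_le_mul_of_nonneg_left (h1.trans (mul_le_mul_of_nonneg_right hpow (hpos z))) hl
  have h2' := mul_le_mul_of_nonneg_left (h2.trans (mul_le_mul_of_nonneg_right hpow 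
    (mul_nonneg (by positivity : 0 ≤ (z / y) ^ k) (hpos y)))) hl
  refine ⟨k, ?_, ?_⟩
  · rw [abs_eval_eq, abs_eval_eq]; linarith
  · rw [abs_eval_eq, abs_eval_eq]; linarith

/-- If `√y * |P y / Q y|` is nondecreasing on `(0, 1]` (stated in squared form), then `|P / Q|` can
only decrease there by a factor depending on the degree. -/
lemma ratio_lower_bound (P Q : ℝ[X]) (d : ℕ) (hP : P.natDegree ≤ d) (hQ : Q.natDegree ≤ d)
    (hP0 : ∀ y, 0 < y → y ≤ 1 → P.eval y ≠ 0) (hQ0 : ∀ y, 0 < y → y ≤ 1 → Q.eval y ≠ 0)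
    (hmono : ∀ y z, 0 < y → y ≤ z → z ≤ 1 →
      y * |P.eval y / Q.eval y| ^ 2 ≤ z * |P.eval z / Q.eval z| ^ 2) :
    ∀ y z, 0 < y → y ≤ z → z ≤ 1 →
      ((1 / 3 : ℝ) ^ (2 * d + 1)) ^ (3 ^ (2 * d)) * |P.eval y / Q.eval y| ≤
        |P.eval z / Q.eval z| := by
  set g : ℝ → ℝ := fun y => |P.eval y / Q.eval y| with hgdef
  set κ : ℝ := (1 / 3 : ℝ) ^ (2 * d + 1) with hκdef
  have hκ0 : 0 < κ := by positivity
  have hκ1 : κ ≤ 1 := pow_le_one₀ (by norm_num) (by norm_num)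
  have hg : ∀ y, 0 < y → y ≤ 1 → 0 < g y := fun y h1 h2 =>
    abs_pos.2 (div_ne_zero (hP0 y h1 h2) (hQ0 y h1 h2))
  set S : Multiset ℝ := ((P.map (algebraMap ℝ ℂ)).roots + (Q.map (algebraMap ℝ ℂ)).roots).map norm
    with hS
  have hcard : Multiset.card S ≤ 2 * d := by
    have h1 := (Polynomial.card_roots' (P.map (algebraMap ℝ ℂ))).trans
      ((Polynomial.natDegree_map_le).trans hP)
    have h2 := (Polynomial.card_roots' (Q.map (algebraMap ℝ ℂ))).trans
      ((Polynomial.natDegree_map_le).trans hQ)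
    simp only [hS, Multiset.card_map, Multiset.card_add]
    omega
  have main := chain_bound (Multiset.card S) κ hκ0 hκ1 S g rfl hg ?_ ?_
  · intro y z hy hyz hz
    refine le_trans ?_ (main y z hy hyz hz)
    refine mul_le_mul_of_nonneg_right ?_ (hg y hy (hyz.trans hz)).le
    exact pow_le_pow_of_le_one hκ0.le hκ1 (Nat.pow_le_pow_right (by norm_num) hcard)
  · intro y z hy hyz hz h9
    have h := hmono y z hy hyz hz
    have gy := hg y hy (hyz.trans hz)
    have gz := hg z (hy.trans_le hyz) hz
    have hk : κ ≤ 1 / 3 := by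
      have := pow_le_pow_of_le_one (by norm_num : (0:ℝ) ≤ 1 / 3) (by norm_num) (by omega : 1 ≤ 2 * d + 1)
      simpa only [pow_one] using this
    have h' : g y ≤ 3 * g z := by
      refine le_of_sq_le_sq ?_ (by positivity)
      have : y * g y ^ 2 ≤ y * (3 * g z) ^ 2 := by
        have h3 : z * g z ^ 2 ≤ 9 * y * g z ^ 2 := by gcongr
        change y * g y ^ 2 ≤ z * g z ^ 2 at h
        linarith
      exact le_of_mul_le_mul_left this hy
    have := mul_le_mul_of_nonneg_right hk gy.le
    linarith
  · intro y z hy hyz hz hr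
    have hz0 : 0 < z := hy.trans_le hyz
    have gy := hg y hy (hyz.trans hz)
    have gz := hg z hz0 hz
    obtain ⟨k, p1, p2⟩ := eval_ratio_bound P d hP y z hy hyz fun w hw =>
      hr _ (Multiset.mem_map_of_mem _ (Multiset.mem_add.2 (Or.inl hw)))
    obtain ⟨l, q1, q2⟩ := eval_ratio_bound Q d hQ y z hy hyz fun w hw =>
      hr _ (Multiset.mem_map_of_mem _ (Multiset.mem_add.2 (Or.inr hw)))
    have hPy := abs_pos.2 (hP0 y hy (hyz.trans hz))
    have hQy := abs_pos.2 (hQ0 y hy (hyz.trans hz))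
    have hPz := abs_pos.2 (hP0 z hz0 hz)
    have hQz := abs_pos.2 (hQ0 z hz0 hz)
    have h := hmono y z hy hyz hz
    change y * g y ^ 2 ≤ z * g z ^ 2 at h
    have egy : g y = |P.eval y| / |Q.eval y| := abs_div _ _
    have egz : g z = |P.eval z| / |Q.eval z| := abs_div _ _
    set t := z / y with ht
    have ht1 : 1 ≤ t := (one_le_div hy).2 hyz
    have ht0 : 0 < t := by linarith
    have hKK : κ * (3 ^ d * 3 ^ d) ≤ 1 := by
      have : κ * (3 ^ d * 3 ^ d) = 1 / 3 := by
        rw [hκdef, one_div_pow, ← pow_add, pow_succ, ← two_mul]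
        field_simp
      rw [this]; norm_num
    have goal' : g y ≤ (3 ^ d * 3 ^ d) * g z := by
      -- `g` behaves like `t ^ (k - l)`. For `k < l` it decays at least like `t⁻¹`, while
      -- monotonicity forbids decay beyond `t ^ (-1/2)`, which bounds `t` and hence the loss.
      rcases le_or_gt l k with hkl | hkl
      · rw [egy, egz, mul_div_assoc', div_le_div_iff₀ hQy hQz]
        have htk : t ^ l ≤ t ^ k := pow_le_pow_right₀ ht1 hkl
        have : t ^ l * (|P.eval y| * |Q.eval z|) ≤
            t ^ l * (3 ^ d * 3 ^ d * |P.eval z| * |Q.eval y|) := by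
          calc t ^ l * (|P.eval y| * |Q.eval z|)
              ≤ t ^ k * |P.eval y| * |Q.eval z| := by
                rw [← mul_assoc]; gcongr
            _ ≤ (3 ^ d * |P.eval z|) * (3 ^ d * (t ^ l * |Q.eval y|)) := by gcongr
            _ = _ := by ring
        exact le_of_mul_le_mul_left this (by positivity)
      · have h1 : t * g z ≤ (3 ^ d * 3 ^ d) * g y := by
          rw [egy, egz, mul_div_assoc', mul_div_assoc', div_le_div_iff₀ hQz hQy]
          have htk : t ^ k * t ≤ t ^ l := by
            rw [← pow_succ]; exact pow_le_pow_right₀ ht1 hkl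
          have : t ^ k * (t * |P.eval z| * |Q.eval y|) ≤
              t ^ k * (3 ^ d * 3 ^ d * |P.eval y| * |Q.eval z|) := by
            calc t ^ k * (t * |P.eval z| * |Q.eval y|)
                = (t ^ k * t) * |Q.eval y| * |P.eval z| := by ring
              _ ≤ t ^ l * |Q.eval y| * |P.eval z| := by gcongr
              _ ≤ (3 ^ d * |Q.eval z|) * (3 ^ d * (t ^ k * |P.eval y|)) := by gcongr
              _ = _ := by ring
          exact le_of_mul_le_mul_left this (by positivity)
        have h2 : g y ^ 2 ≤ t * g z ^ 2 := by
          rw [ht, div_mul_eq_mul_div, le_div_iff₀ hy]; linarith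
        have h3 : g y * g y ≤ g y * ((3 ^ d * 3 ^ d) * g z) := by
          calc g y * g y ≤ (t * g z) * g z := by linarith
            _ ≤ ((3 ^ d * 3 ^ d) * g y) * g z := by gcongr
            _ = _ := by ring
        exact le_of_mul_le_mul_left h3 gy
    calc κ * g y ≤ κ * ((3 ^ d * 3 ^ d) * g z) := by gcongr
      _ = (κ * (3 ^ d * 3 ^ d)) * g z := by ring
      _ ≤ 1 * g z := by gcongr
      _ = g z := one_mul _

/-! ### Normal form of odd rational functions -/

lemma expand_contract_of_even (f : ℝ[X]) (hf : ∀ n, Odd n → f.coeff n = 0) :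
    expand ℝ 2 (contract 2 f) = f := by
  ext n
  rw [coeff_expand two_pos]
  split_ifs with h
  · rw [coeff_contract two_ne_zero, Nat.div_mul_cancel h]
  · exact (hf n (Nat.not_even_iff_odd.1 fun he => h he.two_dvd)).symm

lemma coeff_eq_of_eval_neg (f : ℝ[X]) (ε : ℝ)
    (hf : ∀ x ∈ Set.Icc (-1 : ℝ) 1, f.eval (-x) = ε * f.eval x) (n : ℕ) :
    f.coeff n * (-1) ^ n = ε * f.coeff n := by
  have h : f.comp (C (-1) * X) = C ε * f := by
    refine eq_of_infinite_eval_eq _ _ ((Set.Icc_infinite (by norm_num : (-1 : ℝ) < 1)).mono ?_)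
    intro x hx
    simpa using hf x hx
  have := congrArg (fun p => coeff p n) h
  simpa only [comp_C_mul_X_coeff, coeff_C_mul] using this

/-- With `R = p / q`, the polynomial `p(x) q(-x)` is odd and `q(x) q(-x)` is even, and their quotient
is `R`. -/
lemma odd_rep {m : ℕ} {R : ℝ → ℝ} (hR : QMem m R)
    (hodd : ∀ x ∈ Set.Icc (-1 : ℝ) 1, R (-x) = -R x) :
    ∃ P Q : ℝ[X], P.natDegree ≤ 2 * m ∧ Q.natDegree ≤ 2 * m ∧
      (∀ x ∈ Set.Icc (-1 : ℝ) 1, Q.eval (x ^ 2) ≠ 0) ∧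
      ∀ x ∈ Set.Icc (-1 : ℝ) 1, R x = x * (P.eval (x ^ 2) / Q.eval (x ^ 2)) := by
  obtain ⟨p, q, hp, hq, hq0, hpq⟩ := hR
  have hneg : ∀ x ∈ Set.Icc (-1 : ℝ) 1, -x ∈ Set.Icc (-1 : ℝ) 1 := fun x hx =>
    ⟨by linarith [hx.2], by linarith [hx.1]⟩
  set q' := q.comp (-X) with hq'
  have hq'e : ∀ x, q'.eval x = q.eval (-x) := by intro x; simp [hq']
  have hq'd : q'.natDegree ≤ m := by simpa [hq', natDegree_comp] using hq
  have hN : ∀ n, Even n → (p * q').coeff n = 0 := by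
    intro n hn
    have := coeff_eq_of_eval_neg (p * q') (-1) ?_ n
    · rw [hn.neg_one_pow] at this; linarith
    · intro x hx
      have h := hodd x hx
      rw [hpq x hx, hpq _ (hneg x hx), ← neg_div, div_eq_div_iff (hq0 _ (hneg x hx)) (hq0 x hx)] at h
      simp only [eval_mul, hq'e, neg_neg]
      linarith
  have hD : ∀ n, Odd n → (q * q').coeff n = 0 := by
    intro n hn
    have := coeff_eq_of_eval_neg (q * q') 1 ?_ n
    · rw [hn.neg_one_pow] at this; linarith
    · intro x hx
      simp only [eval_mul, hq'e, neg_neg]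
      ring
  have eN : expand ℝ 2 (contract 2 (p * q').divX) = (p * q').divX :=
    expand_contract_of_even _ fun n hn => by
      rw [coeff_divX]; exact hN _ hn.add_one
  have eD := expand_contract_of_even _ hD
  have eN' : (p * q').divX * X = p * q' := by
    have := divX_mul_X_add (p * q')
    rwa [hN 0 Even.zero, C_0, add_zero] at this
  have vN : ∀ x : ℝ, p.eval x * q.eval (-x) = x * (contract 2 (p * q').divX).eval (x ^ 2) := by
    intro x
    rw [← expand_eval, eN, ← hq'e, ← eval_mul, ← eN', eval_mul, eval_X, mul_comm, eN']
  have vD : ∀ x : ℝ, (contract 2 (q * q')).eval (x ^ 2) = q.eval x * q.eval (-x) := by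
    intro x
    rw [← expand_eval, eD, eval_mul, hq'e]
  refine ⟨contract 2 (p * q').divX, contract 2 (q * q'), ?_, ?_, ?_, ?_⟩
  · have h1 := natDegree_expand 2 (contract 2 (p * q').divX)
    rw [eN] at h1
    have h2 : (p * q').divX.natDegree ≤ (p * q').natDegree := natDegree_divX_le
    have h3 : (p * q').natDegree ≤ _ := natDegree_mul_le
    omega
  · have h1 := natDegree_expand 2 (contract 2 (q * q'))
    rw [eD] at h1
    have h3 : (q * q').natDegree ≤ _ := natDegree_mul_le
    omega
  · intro x hx
    rw [vD]
    exact mul_ne_zero (hq0 x hx) (hq0 _ (hneg x hx))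
  · intro x hx
    rw [hpq x hx, mul_div_assoc', ← vN, vD, mul_div_mul_right _ _ (hq0 _ (hneg x hx))]

/-! ### The ratios are bounded above -/

lemma strictMonoOn_of_derivWithin (R : ℝ → ℝ)
    (hd : ∀ x ∈ Set.Icc (-1 : ℝ) 1, 0 < derivWithin R (Set.Icc (-1 : ℝ) 1) x) :
    StrictMonoOn R (Set.Icc (-1 : ℝ) 1) := by
  have hdiff : DifferentiableOn ℝ R (Set.Icc (-1 : ℝ) 1) := fun x hx =>
    differentiableWithinAt_of_derivWithin_ne_zero (hd x hx).ne'
  refine strictMonoOn_of_deriv_pos (convex_Icc _ _) hdiff.continuousOn fun x hx => ?_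
  have hx' := interior_subset hx
  rw [← derivWithin_of_mem_nhds (mem_interior_iff_mem_nhds.1 hx)]
  exact hd x hx'

lemma supNorm_eq (R : ℝ → ℝ) (hodd : ∀ x ∈ Set.Icc (-1 : ℝ) 1, R (-x) = -R x)
    (hm : StrictMonoOn R (Set.Icc (-1 : ℝ) 1)) : _root_.supNorm R = R 1 := by
  have h1 : (1 : ℝ) ∈ Set.Icc (-1 : ℝ) 1 := by norm_num
  have h1' : (-1 : ℝ) ∈ Set.Icc (-1 : ℝ) 1 := by norm_num
  have hle : ∀ x ∈ Set.Icc (-1 : ℝ) 1, |R x| ≤ R 1 := by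
    intro x hx
    rw [abs_le, ← hodd 1 h1]
    exact ⟨hm.monotoneOn h1' hx hx.1, hm.monotoneOn hx h1 hx.2⟩
  refine IsGreatest.csSup_eq ⟨⟨1, h1, ?_⟩, ?_⟩
  · exact abs_of_nonneg ((abs_nonneg _).trans (hle 1 h1))
  · rintro _ ⟨x, hx, rfl⟩
    exact hle x hx

/-- A bound for `R' 0 / ‖R‖` depending only on the degree `m`. -/
lemma deriv_zero_le (m : ℕ) (R : ℝ → ℝ) (hR : QMem m R)
    (hodd : ∀ x ∈ Set.Icc (-1 : ℝ) 1, R (-x) = -R x)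
    (hd : ∀ x ∈ Set.Icc (-1 : ℝ) 1, 0 < derivWithin R (Set.Icc (-1 : ℝ) 1) x) :
    derivWithin R (Set.Icc (-1 : ℝ) 1) 0 / _root_.supNorm R ≤
      (((1 / 3 : ℝ) ^ (2 * (2 * m) + 1)) ^ (3 ^ (2 * (2 * m))))⁻¹ := by
  have hm := strictMonoOn_of_derivWithin R hd
  rw [supNorm_eq R hodd hm]
  have h1 : (1 : ℝ) ∈ Set.Icc (-1 : ℝ) 1 := by norm_num
  have h0 : (0 : ℝ) ∈ Set.Icc (-1 : ℝ) 1 := by norm_num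
  have hR0 : R 0 = 0 := by
    have := hodd 0 h0
    rw [neg_zero] at this; linarith
  have hpos : ∀ x : ℝ, 0 < x → x ≤ 1 → 0 < R x := fun x hx hx1 => by
    rw [← hR0]; exact hm h0 ⟨by linarith, hx1⟩ hx
  obtain ⟨P, Q, hP, hQ, hQ0, hPQ⟩ := odd_rep hR hodd
  have hsq : ∀ y : ℝ, 0 < y → y ≤ 1 → √y ∈ Set.Icc (-1 : ℝ) 1 ∧ 0 < √y ∧ √y ^ 2 = y := fun y h1 h2 =>
    ⟨⟨by linarith [Real.sqrt_nonneg y], Real.sqrt_le_one.2 h2⟩, Real.sqrt_pos.2 h1, Real.sq_sqrt h1.le⟩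
  have hRsq : ∀ y : ℝ, 0 < y → y ≤ 1 → R (√y) = √y * (P.eval y / Q.eval y) := fun y h1 h2 => by
    obtain ⟨a, b, c⟩ := hsq y h1 h2
    have := hPQ _ a
    rwa [c] at this
  have hgpos : ∀ y : ℝ, 0 < y → y ≤ 1 → 0 < P.eval y / Q.eval y := fun y h1 h2 => by
    obtain ⟨a, b, c⟩ := hsq y h1 h2
    have := hpos _ b a.2
    rw [hRsq y h1 h2] at this
    exact (mul_pos_iff_of_pos_left b).1 this
  have key := ratio_lower_bound P Q (2 * m) hP hQ
    (fun y h1 h2 h => by simpa [h] using hgpos y h1 h2)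
    (fun y h1 h2 h => by simpa [h] using hgpos y h1 h2) ?_
  · set c := ((1 / 3 : ℝ) ^ (2 * (2 * m) + 1)) ^ (3 ^ (2 * (2 * m))) with hc
    have hc0 : 0 < c := by positivity
    have hbound : ∀ x : ℝ, 0 < x → x ≤ 1 → R x / x ≤ c⁻¹ * R 1 := by
      intro x hx hx1
      have hx2 : 0 < x ^ 2 := by positivity
      have hx21 : x ^ 2 ≤ 1 := pow_le_one₀ hx.le hx1
      have := key (x ^ 2) 1 hx2 hx21 le_rfl
      rw [abs_of_pos (hgpos _ hx2 hx21), abs_of_pos (hgpos _ one_pos le_rfl)] at this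
      have e1 := hPQ 1 h1
      have ex := hPQ x ⟨by linarith, hx1⟩
      rw [one_pow, one_mul] at e1
      rw [e1, ex, mul_div_cancel_left₀ _ hx.ne', le_inv_mul_iff₀ hc0]
      exact this
    rw [div_le_iff₀ (hpos 1 one_pos le_rfl)]
    have hder := (differentiableWithinAt_of_derivWithin_ne_zero (hd 0 h0).ne').hasDerivWithinAt
    have hder' := hder.mono (show Set.Ioo (0 : ℝ) 1 ⊆ Set.Icc (-1) 1 from fun x hx =>
      ⟨by linarith [hx.1], hx.2.le⟩)
    rw [hasDerivWithinAt_iff_tendsto_slope' (by simp)] at hder'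
    have : (nhdsWithin (0 : ℝ) (Set.Ioo 0 1)).NeBot := by
      rw [← mem_closure_iff_nhdsWithin_neBot, closure_Ioo (by norm_num)]; simp
    refine le_of_tendsto hder' ?_
    filter_upwards [self_mem_nhdsWithin] with x hx
    rw [slope_def_field, hR0, sub_zero, sub_zero]
    exact hbound x hx.1 hx.2.le
  · intro y z hy hyz hz
    obtain ⟨a, b, c⟩ := hsq y hy (hyz.trans hz)
    obtain ⟨a', b', c'⟩ := hsq z (hy.trans_le hyz) hz
    have h := hm.monotoneOn a a' (Real.sqrt_le_sqrt hyz)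
    have h2 := pow_le_pow_left₀ (hpos _ b a.2).le h 2
    rw [hRsq y hy (hyz.trans hz), hRsq z (hy.trans_le hyz) hz, mul_pow, mul_pow, c, c'] at h2
    rwa [sq_abs, sq_abs]

/-! ### Functions with large ratio -/

/-- Inductive step for `exists_factors` at a point `y`, where `p, q, p', q'` are the values of
`P, Q` and their derivatives there: it controls the logarithmic slope after multiplying `P` by
`1 + a y` and `Q` by `1 + d² a y`. The new factor contributes `G / E` to the loss of slope, which is at
most `m` always and at most `2 / (a y)` for large `a y`; the old factors contribute at most `K y`
for small `y`. For `a` large these two contributions do not overlap. -/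
lemma factor_step {d m a δ η M K y p q p' q' : ℝ} (hd : 1 < d) (hm : m = 2 * (d - 1) / (d + 1))
    (hm1 : m < 1) (hδ : δ = (1 - m) / (2 * (K + 1))) (hη0 : 0 < η) (ha0 : 0 < a)
    (ha1 : 2 ≤ a * (δ * η)) (hK : 0 ≤ K) (hy : 0 ≤ y) (hp : 0 < p) (hq : 0 < q)
    (hM1 : 2 * y * (q' * p - p' * q) ≤ M * (p * q))
    (hK1 : 2 * y * (q' * p - p' * q) ≤ K * y * (p * q)) :
    2 * y * ((q' * (1 + d ^ 2 * a * y) + q * (d ^ 2 * a)) * (p * (1 + a * y)) -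
        (p' * (1 + a * y) + p * a) * (q * (1 + d ^ 2 * a * y))) ≤
      max ((1 + m) / 2) (M + η) * (p * (1 + a * y) * (q * (1 + d ^ 2 * a * y))) ∧
    2 * y * ((q' * (1 + d ^ 2 * a * y) + q * (d ^ 2 * a)) * (p * (1 + a * y)) -
        (p' * (1 + a * y) + p * a) * (q * (1 + d ^ 2 * a * y))) ≤
      (K + 2 * (d ^ 2 - 1) * a) * y * (p * (1 + a * y) * (q * (1 + d ^ 2 * a * y))) := by
  have hm0 : 0 < m := hm ▸ div_pos (by linarith) (by linarith)
  have hu0 : 0 ≤ a * y := by positivity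
  have hd1 : 0 < d ^ 2 - 1 := by nlinarith
  obtain ⟨T, hT⟩ : ∃ T, T = p * q := ⟨_, rfl⟩
  have hT0 : 0 < T := hT ▸ mul_pos hp hq
  obtain ⟨W, hW⟩ : ∃ W, W = 2 * y * (q' * p - p' * q) := ⟨_, rfl⟩
  obtain ⟨u, hu⟩ : ∃ u, u = a * y := ⟨_, rfl⟩
  obtain ⟨E, hE⟩ : ∃ E, E = (1 + u) * (1 + d ^ 2 * u) := ⟨_, rfl⟩
  obtain ⟨G, hG⟩ : ∃ G, G = 2 * (d ^ 2 - 1) * u := ⟨_, rfl⟩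
  have eT : p * (1 + a * y) * (q * (1 + d ^ 2 * a * y)) = E * T := by
    rw [hE, hT, hu]; ring
  have eW : 2 * y * ((q' * (1 + d ^ 2 * a * y) + q * (d ^ 2 * a)) * (p * (1 + a * y)) -
      (p' * (1 + a * y) + p * a) * (q * (1 + d ^ 2 * a * y))) = W * E + G * T := by
    rw [hE, hT, hG, hW, hu]; ring
  rw [eT, eW]
  rw [← hT, ← hW] at hM1 hK1
  rw [← hu] at hu0
  have hd2 : 0 ≤ d ^ 2 * u := by positivity
  have hE1 : 1 ≤ E := by
    rw [hE]; nlinarith [mul_nonneg hu0 hd2]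
  have hE0 : 0 < E := by linarith
  have hG0 : 0 ≤ G := by rw [hG]; positivity
  have hGm : G ≤ m * E := by
    have : G = m * ((d + 1) ^ 2 * u) := by
      have : d + 1 ≠ 0 := by linarith
      rw [hG, hm]; field_simp; ring
    rw [this]
    refine mul_le_mul_of_nonneg_left ?_ hm0.le
    rw [hE]
    linarith [sq_nonneg (1 - d * u)]
  have hGu : G * u ≤ 2 * E := by
    rw [hG, hE]
    linarith [mul_nonneg hu0 hu0]
  clear eT eW hT hW hE
  constructor
  · rcases le_total y δ with hyd | hyd
    · have h1 : W ≤ (1 - m) / 2 * T := by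
        refine hK1.trans (mul_le_mul_of_nonneg_right ?_ hT0.le)
        calc K * y ≤ (K + 1) * δ := mul_le_mul (by linarith) hyd hy (by linarith)
          _ = (1 - m) / 2 := by
            have : K + 1 ≠ 0 := by linarith
            rw [hδ]; field_simp
      calc W * E + G * T ≤ (1 - m) / 2 * T * E + m * E * T := by gcongr
        _ = (1 + m) / 2 * (E * T) := by ring
        _ ≤ _ := mul_le_mul_of_nonneg_right (le_max_left _ _) (by positivity)
    · have h1 : G ≤ η * E := by
        have h2 : 2 ≤ u * η := by
          have : a * (δ * η) ≤ a * (y * η) := by gcongr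
          rw [hu]; linarith
        have h3 : G * 2 ≤ G * (u * η) := mul_le_mul_of_nonneg_left h2 hG0
        have h4 : G * u * η ≤ 2 * E * η := mul_le_mul_of_nonneg_right hGu hη0.le
        linarith
      calc W * E + G * T ≤ M * T * E + η * E * T := by gcongr
        _ = (M + η) * (E * T) := by ring
        _ ≤ _ := mul_le_mul_of_nonneg_right (le_max_right _ _) (by positivity)
  · have h1 : G ≤ 2 * (d ^ 2 - 1) * a * y * E := by
      have : G * 1 ≤ G * E := mul_le_mul_of_nonneg_left hE1 hG0
      rw [hG, hu] at this
      rw [hG, hu]; linarith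
    calc W * E + G * T ≤ K * y * T * E + (2 * (d ^ 2 - 1) * a * y * E) * T := by gcongr
      _ = _ := by ring

/-- Numerator and denominator, as functions of `y = x²`, of `∏ (1 + a_i y) / (1 + d² a_i y)` for
suitable scales `a_i`. The quantity `2 y (Q' P - P' Q) / (P Q)` is `1 - x R' / R` for
`R x = x P(x²) / Q(x²)`, so the bound `M < 1` expresses monotonicity of `R`; the bound `K y` is
needed only for the induction. -/
lemma exists_factors (b d : ℝ) (hb : 0 < b) (hd : 1 < d) (hd3 : d < 3) (hbd : b < d ^ 2) (k : ℕ) :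
    ∃ P Q : ℝ[X], P.natDegree ≤ k ∧ Q.natDegree ≤ k ∧ P.eval 0 = 1 ∧ Q.eval 0 = 1 ∧
      (∀ y, 0 ≤ y → 0 < P.eval y ∧ 0 < Q.eval y) ∧
      b ^ k * P.eval 1 ≤ Q.eval 1 ∧
      ∃ M < 1, ∃ K ≥ 0, ∀ y, 0 ≤ y →
        2 * y * (Q.derivative.eval y * P.eval y - P.derivative.eval y * Q.eval y) ≤
          M * (P.eval y * Q.eval y) ∧
        2 * y * (Q.derivative.eval y * P.eval y - P.derivative.eval y * Q.eval y) ≤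
          K * y * (P.eval y * Q.eval y) := by
  induction k with
  | zero =>
    exact ⟨1, 1, by simp, by simp, by simp, by simp, by simp, by simp, 0, by norm_num, 0, le_rfl,
      by simp⟩
  | succ k ih =>
    obtain ⟨P, Q, hP, hQ, hP0, hQ0, hpos, hb1, M, hM, K, hK, hMK⟩ := ih
    set m : ℝ := 2 * (d - 1) / (d + 1) with hm
    have hm1 : m < 1 := by rw [hm, div_lt_one (by linarith)]; linarith
    have hm0 : 0 < m := div_pos (by linarith) (by linarith)
    set δ : ℝ := (1 - m) / (2 * (K + 1)) with hδ
    have hδ0 : 0 < δ := div_pos (by linarith) (by linarith)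
    set η : ℝ := (1 - M) / 2 with hη
    have hη0 : 0 < η := by rw [hη]; linarith
    -- The first term separates the new scale from the old ones; the second makes the new factor at
    -- most `1 / b` at `y = 1`.
    set a : ℝ := 2 / (δ * η) + b / (d ^ 2 - b) with ha
    have hdb : 0 < d ^ 2 - b := by linarith
    have ha1 : 2 ≤ a * (δ * η) := by
      rw [ha, add_mul, div_mul_cancel₀ _ (by positivity)]
      have : 0 ≤ b / (d ^ 2 - b) * (δ * η) := by positivity
      linarith
    have ha2 : b ≤ a * (d ^ 2 - b) := by
      rw [ha, add_mul, div_mul_cancel₀ _ hdb.ne']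
      have : 0 ≤ 2 / (δ * η) * (d ^ 2 - b) := by positivity
      linarith
    have ha0 : 0 < a := by positivity
    clear_value a
    have hdeg : ∀ r : ℝ, (1 + C r * X : ℝ[X]).natDegree ≤ 1 := fun r => by
      compute_degree
    refine ⟨P * (1 + C a * X), Q * (1 + C (d ^ 2 * a) * X), natDegree_mul_le.trans (add_le_add hP (hdeg _)),
      natDegree_mul_le.trans (add_le_add hQ (hdeg _)), by simp [hP0], by simp [hQ0], ?_, ?_,
      max ((1 + m) / 2) (M + η), ?_, K + 2 * (d ^ 2 - 1) * a, ?_, ?_⟩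
    · intro y hy
      obtain ⟨h1, h2⟩ := hpos y hy
      simp only [eval_mul, eval_add, eval_one, eval_C, eval_X]
      constructor <;> positivity
    · simp only [eval_mul, eval_add, eval_one, eval_C, eval_X]
      have h1 := (hpos 1 zero_le_one).1
      calc b ^ (k + 1) * (P.eval 1 * (1 + a * 1)) = (b ^ k * P.eval 1) * (b * (1 + a)) := by ring
        _ ≤ Q.eval 1 * (1 + d ^ 2 * a * 1) := by
          refine mul_le_mul hb1 (by linarith) (by positivity) (hpos 1 zero_le_one).2.le
    · refine max_lt (by linarith) (by rw [hη]; linarith)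
    · have : 0 ≤ d ^ 2 - 1 := by nlinarith
      positivity
    · intro y hy
      obtain ⟨hPy, hQy⟩ := hpos y hy
      obtain ⟨hM1, hK1⟩ := hMK y hy
      simp only [derivative_mul, derivative_add, derivative_one, derivative_C, derivative_X, eval_mul,
        eval_add, eval_one, eval_C, eval_X, zero_mul, zero_add, mul_one]
      exact factor_step hd hm hm1 hδ hη0 ha0 ha1 hK hy hPy hQy hM1 hK1

/-- Every `b ^ k` with `0 < b < 9` is a lower bound for some admissible ratio in degree `2 k + 1`. -/
lemma exists_large (b : ℝ) (hb : 0 < b) (hb9 : b < 9) (k : ℕ) :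
    ∃ R : ℝ → ℝ, QMem (2 * k + 1) R ∧
        (∀ x ∈ Set.Icc (-1:ℝ) 1, R (-x) = - R x) ∧
        (∀ x ∈ Set.Icc (-1:ℝ) 1, 0 < derivWithin R (Set.Icc (-1:ℝ) 1) x) ∧
        (∃ x ∈ Set.Icc (-1:ℝ) 1, R x ≠ 0) ∧
        b ^ k ≤ derivWithin R (Set.Icc (-1:ℝ) 1) 0 / _root_.supNorm R := by
  obtain ⟨d, hd1, hd3, hbd⟩ : ∃ d : ℝ, 1 < d ∧ d < 3 ∧ b < d ^ 2 := by
    have hs : √b < 3 := by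
      rw [Real.sqrt_lt' (by norm_num)]; linarith
    obtain ⟨d, h1, h2⟩ := exists_between (max_lt hs (by norm_num : (1 : ℝ) < 3))
    rw [max_lt_iff] at h1
    exact ⟨d, h1.2, h2, (Real.sqrt_lt' (by linarith)).1 h1.1⟩
  obtain ⟨P, Q, hP, hQ, hP0, hQ0, hpos, hb1, M, hM, K, -, hMK⟩ := exists_factors b d hb hd1 hd3 hbd k
  set R : ℝ → ℝ := fun x => x * P.eval (x ^ 2) / Q.eval (x ^ 2) with hR
  have hder : ∀ x : ℝ, HasDerivAt R ((P.eval (x ^ 2) * Q.eval (x ^ 2) -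
      2 * x ^ 2 * (Q.derivative.eval (x ^ 2) * P.eval (x ^ 2) -
        P.derivative.eval (x ^ 2) * Q.eval (x ^ 2))) / Q.eval (x ^ 2) ^ 2) x := by
    intro x
    have hx2 : HasDerivAt (fun x : ℝ => x ^ 2) (2 * x) x := by simpa using hasDerivAt_pow 2 x
    have hPd : HasDerivAt (fun x : ℝ => P.eval (x ^ 2)) (P.derivative.eval (x ^ 2) * (2 * x)) x :=
      HasDerivAt.comp (h₂ := fun t => P.eval t) x (P.hasDerivAt (x ^ 2)) hx2
    have hQd : HasDerivAt (fun x : ℝ => Q.eval (x ^ 2)) (Q.derivative.eval (x ^ 2) * (2 * x)) x :=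
      HasDerivAt.comp (h₂ := fun t => Q.eval t) x (Q.hasDerivAt (x ^ 2)) hx2
    have h := ((hasDerivAt_id x).mul hPd).div hQd (hpos _ (sq_nonneg x)).2.ne'
    refine HasDerivAt.congr_deriv h ?_
    simp only [Pi.mul_apply, id]
    ring
  have hdw : ∀ x ∈ Set.Icc (-1 : ℝ) 1, derivWithin R (Set.Icc (-1 : ℝ) 1) x = _ := fun x hx =>
    (hder x).hasDerivWithinAt.derivWithin (uniqueDiffOn_Icc (by norm_num) x hx)
  have hodd : ∀ x ∈ Set.Icc (-1:ℝ) 1, R (-x) = - R x := by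
    intro x _
    simp only [hR, neg_sq]
    ring
  have hd : ∀ x ∈ Set.Icc (-1:ℝ) 1, 0 < derivWithin R (Set.Icc (-1:ℝ) 1) x := by
    intro x hx
    rw [hdw x hx]
    obtain ⟨h1, h2⟩ := hpos _ (sq_nonneg x)
    refine div_pos ?_ (by positivity)
    have := (hMK _ (sq_nonneg x)).1
    nlinarith [mul_pos h1 h2]
  have hR1 : R 1 = P.eval 1 / Q.eval 1 := by simp [hR]
  obtain ⟨p1, q1⟩ := hpos 1 zero_le_one
  refine ⟨R, ⟨X * expand ℝ 2 P, expand ℝ 2 Q, ?_, ?_, ?_, ?_⟩, hodd, hd, ⟨1, by norm_num, ?_⟩, ?_⟩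
  · refine natDegree_mul_le.trans ?_
    rw [natDegree_expand, natDegree_X]; omega
  · rw [natDegree_expand]; omega
  · intro x _
    rw [expand_eval]
    exact (hpos _ (sq_nonneg x)).2.ne'
  · intro x _
    simp [hR, expand_eval]
  · rw [hR1]; positivity
  · rw [supNorm_eq R hodd (strictMonoOn_of_derivWithin R hd), hdw 0 (by norm_num), hR1,
      le_div_iff₀ (by positivity)]
    simp only [ne_eq, OfNat.ofNat_ne_zero, not_false_eq_true, zero_pow, hP0, hQ0]
    rw [mul_div_assoc', div_le_iff₀ q1]
    linarith

end

/-- For each `n ≥ 1`, the supremum of `R'(0)/‖R‖` over all odd, not identically zero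
`R ∈ Q_{2n-1}` with `R' > 0` on `[-1,1]` is at least `9^(n-1)`. -/
theorem sup_deriv_ratio_ge (n : ℕ) (hn : 0 < n) :
    (9:ℝ) ^ (n - 1) ≤
      sSup {t : ℝ | ∃ R : ℝ → ℝ, QMem (2 * n - 1) R ∧
        (∀ x ∈ Set.Icc (-1:ℝ) 1, R (-x) = - R x) ∧
        (∀ x ∈ Set.Icc (-1:ℝ) 1, 0 < derivWithin R (Set.Icc (-1:ℝ) 1) x) ∧
        (∃ x ∈ Set.Icc (-1:ℝ) 1, R x ≠ 0) ∧
        t = derivWithin R (Set.Icc (-1:ℝ) 1) 0 / supNorm R} := by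
  obtain ⟨k, rfl⟩ : ∃ k, n = k + 1 := ⟨n - 1, by omega⟩
  rw [show 2 * (k + 1) - 1 = 2 * k + 1 by omega, Nat.add_sub_cancel]
  have hlim : Filter.Tendsto (fun b : ℝ => b ^ k) (nhdsWithin 9 (Set.Iio 9)) (nhds (9 ^ k)) :=
    ((continuous_pow k).tendsto 9).mono_left nhdsWithin_le_nhds
  refine le_of_tendsto hlim ?_
  filter_upwards [Ioo_mem_nhdsLT (by norm_num : (0 : ℝ) < 9)] with b hb
  obtain ⟨R, h1, h2, h3, h4, h5⟩ := exists_large b hb.1 hb.2 k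
  refine h5.trans (le_csSup
    ⟨(((1 / 3 : ℝ) ^ (2 * (2 * (2 * k + 1)) + 1)) ^ (3 ^ (2 * (2 * (2 * k + 1)))))⁻¹, ?_⟩ ⟨R, h1, h2, h3, h4, rfl⟩)
  rintro _ ⟨S, s1, s2, s3, -, rfl⟩
  exact deriv_zero_le (2 * k + 1) S s1 s2 s3
end

section
/- Let n be a positive integer, let u_i < v_i for i = 1,…,n be real numbers, and set Π = { y = (y_1,…,y_n) ∈ ℝ^n : u_i ≤ y_i ≤ v_i for all i }. For k = 1,…,n let Π_k^+ = { y ∈ Π : y_k = v_k } and Π_k^− = { y ∈ Π : y_k = u_k }. Let f_1,…,f_n : Π → ℝ be continuous functions such that for each k, f_k(y) < 0 for all y ∈ Π_k^− and f_k(y) > 0 for all y ∈ Π_k^+. Then there exists z ∈ Π with f_k(z) = 0 for every k = 1,…,n. -/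
/-!
The proof is a discrete form of Stokes' theorem modulo 2. Subdivide the box into `N ^ n` small
boxes and let `g k` be the `ZMod 2`-valued function on the grid points that is `1` where
`0 < f k` and `0` elsewhere. So `g k` is `0` on the face `x k = 0` and `1` on the face `x k = N`.

The cubical cup product `dg₁ ∪ ⋯ ∪ dgₙ` (`cupDiff`) takes on a unit cube the value
`∑ ∏ (increment of g_j on the j-th edge)`, the sum running over all monotone edge paths from the
lowest to the highest vertex. It is closed (`cupDiff_closed`), so that `dg₁ ∪ ω = d (g₁ ∪ ω)` for
`ω = dg₂ ∪ ⋯ ∪ dgₙ`, and its sum over all cubes is a sum over the boundary. There `g₁ ∪ ω`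
contributes nothing on a face orthogonal to a direction `i ≠ 1`, as `gᵢ` is constant on it, and
nothing on `x 1 = 0`, as `g₁` vanishes on it; on `x 1 = N` it restricts to `ω`. By induction on
the dimension the total is `1` (`sum_cupDiff`).

Hence on some cube the cup product is nonzero, and then each `g k` takes both values on that
cube, i.e. each `f k` changes sign on it (`exists_cell`). Letting `N → ∞`, a limit point of these
cubes is a common zero.
-/

namespace PoincareMiranda

open Finset Filter Topology

variable {ι : Type*} [DecidableEq ι]

/-- The cup product `dg_{k₁} ∪ ⋯ ∪ dg_{kₘ}` modulo 2, for the list `[k₁, …, kₘ]`, evaluated on the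
unit cube of the lattice `ι → ℕ` with lowest vertex `x` and edge directions `S`. The intended use
has `#S = m`. Since the coefficients are in `ZMod 2`, increments are written as sums. -/
def cupDiff (g : ι → (ι → ℕ) → ZMod 2) : List ι → (ι → ℕ) → Finset ι → ZMod 2
  | [], _, _ => 1
  | k :: l, x, S => ∑ i ∈ S, (g k (x + Pi.single i 1) + g k x) *
      cupDiff g l (x + Pi.single i 1) (S.erase i)

lemma sum_symm_eq_zero (S : Finset ι) (A : ι → ι → ZMod 2) (hA : ∀ i j, A i j = A j i) :
    ∑ i ∈ S, ∑ j ∈ S.erase i, A i j = 0 := by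
  rw [Finset.sum_sigma']
  refine Finset.sum_involution (fun p _ => ⟨p.2, p.1⟩) ?_ ?_ ?_ ?_
  · rintro ⟨i, j⟩ _
    simp only
    rw [hA j i, CharTwo.add_self_eq_zero]
  · rintro ⟨i, j⟩ h _ he
    simp only [mem_sigma, mem_erase] at h
    simp only [Sigma.mk.injEq] at he
    exact h.2.1 he.1
  · rintro ⟨i, j⟩ h
    simp only [mem_sigma, mem_erase] at h ⊢
    exact ⟨h.2.2, h.2.1.symm, h.1⟩
  · rintro ⟨i, j⟩ _
    rfl

lemma sum_erase_comm (S : Finset ι) (A : ι → ι → ZMod 2) :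
    ∑ i ∈ S, ∑ j ∈ S.erase i, A i j = ∑ i ∈ S, ∑ j ∈ S.erase i, A j i := by
  apply Finset.sum_comm'
  intro i j
  simp only [mem_erase]
  tauto

/-- The cup product of differentials is a cocycle: its values on the upper faces of a cube and on
the lower faces of that cube have the same sum. -/
lemma cupDiff_closed (g : ι → (ι → ℕ) → ZMod 2) (l : List ι) :
    ∀ (x : ι → ℕ) (S : Finset ι),
      ∑ i ∈ S, cupDiff g l (x + Pi.single i 1) (S.erase i) =
        ∑ i ∈ S, cupDiff g l x (S.erase i) := by
  induction l with
  | nil => intro x S; simp [cupDiff]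
  | cons k l ih =>
    intro x S
    simp only [cupDiff, add_mul, Finset.sum_add_distrib]
    have h1 : ∑ i ∈ S, ∑ j ∈ S.erase i, g k (x + Pi.single i 1 + Pi.single j 1) *
        cupDiff g l (x + Pi.single i 1 + Pi.single j 1) ((S.erase i).erase j) = 0 := by
      apply sum_symm_eq_zero
      intro i j
      rw [add_right_comm, Finset.erase_right_comm]
    have h2 : ∑ i ∈ S, ∑ j ∈ S.erase i, g k x *
        cupDiff g l (x + Pi.single j 1) ((S.erase i).erase j) = 0 := by
      simp only [← Finset.mul_sum, ih]
      rw [sum_symm_eq_zero S (fun i j => cupDiff g l x ((S.erase i).erase j)), mul_zero]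
      intro i j
      rw [Finset.erase_right_comm]
    rw [h1, h2, zero_add, add_zero]
    simp only [← Finset.mul_sum, ih]
    rw [sum_erase_comm]
    refine Finset.sum_congr rfl fun i _ => ?_
    rw [Finset.mul_sum]
    refine Finset.sum_congr rfl fun j _ => ?_
    rw [Finset.erase_right_comm]

/-- A cube contained in a face `x i ∈ {0, N}` on which `g i` is constant carries no cup product
containing the factor `dg_i`. -/
lemma cupDiff_eq_zero (g : ι → (ι → ℕ) → ZMod 2) (N : ℕ)
    (h0 : ∀ k x, x k = 0 → g k x = 0) (h1 : ∀ k x, x k = N → g k x = 1) (i : ι) (l : List ι) :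
    ∀ (x : ι → ℕ) (S : Finset ι), i ∈ l → i ∉ S → (x i = 0 ∨ x i = N) → cupDiff g l x S = 0 := by
  induction l with
  | nil => intro x S h; simp at h
  | cons k l ih =>
    intro x S hl hS hx
    rw [cupDiff]
    refine Finset.sum_eq_zero fun j hj => ?_
    have hij : i ≠ j := fun h => hS (h ▸ hj)
    have hxj : (x + Pi.single j 1 : ι → ℕ) i = x i := by simp [hij]
    rcases List.mem_cons.1 hl with rfl | hl
    · rcases hx with hx | hx
      · rw [h0 _ _ (hxj.trans hx), h0 _ _ hx, add_zero, zero_mul]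
      · rw [h1 _ _ (hxj.trans hx), h1 _ _ hx, CharTwo.add_self_eq_zero, zero_mul]
    · rw [ih _ _ hl (fun h => hS (Finset.mem_of_mem_erase h)) (by rwa [hxj]), mul_zero]

/-- A nonzero cup product on a cube forces every factor to take two values at its vertices. -/
lemma exists_of_cupDiff_ne_zero (g : ι → (ι → ℕ) → ZMod 2) (l : List ι) :
    ∀ (x : ι → ℕ) (S : Finset ι), cupDiff g l x S ≠ 0 → ∀ k ∈ l, ∃ a b : ι → ℕ,
      (∀ i, x i ≤ a i ∧ a i ≤ x i + if i ∈ S then 1 else 0) ∧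
      (∀ i, x i ≤ b i ∧ b i ≤ x i + if i ∈ S then 1 else 0) ∧ g k a ≠ g k b := by
  induction l with
  | nil => intro x S _ k h; simp at h
  | cons k l ih =>
    intro x S h m hm
    rw [cupDiff] at h
    obtain ⟨j, hj, hne⟩ := Finset.exists_ne_zero_of_sum_ne_zero h
    rcases List.mem_cons.1 hm with rfl | hm
    · refine ⟨x + Pi.single j 1, x, fun i => ?_, fun i => by simp, fun he => hne ?_⟩
      · by_cases hij : i = j
        · subst hij; simp [hj]
        · simp [hij]
      · rw [he, CharTwo.add_self_eq_zero, zero_mul]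
    · obtain ⟨a, b, ha, hb, hab⟩ := ih _ _ (right_ne_zero_of_mul hne) m hm
      have key : ∀ c : ι → ℕ, (∀ i, (x + Pi.single j 1 : ι → ℕ) i ≤ c i ∧
          c i ≤ (x + Pi.single j 1 : ι → ℕ) i + if i ∈ S.erase j then 1 else 0) →
          ∀ i, x i ≤ c i ∧ c i ≤ x i + if i ∈ S then 1 else 0 := by
        intro c hc i
        have := hc i
        by_cases hij : i = j
        · subst hij
          simp [hj] at this ⊢
          omega
        · simpa [hij] using this
      exact ⟨a, b, key a ha, key b hb, hab⟩

variable [Fintype ι]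

/-- The lowest vertices of the unit cubes with edge directions `S` that subdivide the face
`x i = N` (`i ∉ S`) of the cube `[0, N]^ι`. -/
def cells (N : ℕ) (S : Finset ι) : Finset (ι → ℕ) :=
  Fintype.piFinset fun i => if i ∈ S then range N else {N}

lemma mem_cells {N : ℕ} {S : Finset ι} {x : ι → ℕ} :
    x ∈ cells N S ↔ ∀ i, if i ∈ S then x i < N else x i = N := by
  rw [cells, Fintype.mem_piFinset]
  refine forall_congr' fun i => ?_
  split_ifs <;> simp

lemma sum_cells (N : ℕ) (S : Finset ι) (i : ι) (hi : i ∈ S) (G : (ι → ℕ) → ZMod 2) :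
    ∑ x ∈ cells N S, G x =
      ∑ y ∈ cells N (S.erase i), ∑ t ∈ range N, G (Function.update y i t) := by
  rw [← Finset.sum_product']
  symm
  refine Finset.sum_bij' (fun p _ => Function.update p.1 i p.2)
    (fun x _ => (Function.update x i N, x i)) ?_ ?_ ?_ ?_ ?_
  · rintro ⟨y, t⟩ h
    simp only [mem_product, mem_cells, mem_range] at h ⊢
    intro j
    by_cases hj : j = i
    · subst hj; simp [hi, h.2]
    · simpa [hj] using h.1 j
  · intro x h
    simp only [mem_product, mem_cells, mem_range] at h ⊢
    refine ⟨fun j => ?_, by simpa [hi] using h i⟩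
    by_cases hj : j = i
    · subst hj; simp
    · simpa [hj] using h j
  · rintro ⟨y, t⟩ h
    simp only [mem_product, mem_cells, mem_range] at h
    have : y i = N := by simpa using h.1 i
    simp [← this]
  · intro x h
    simp
  · intro p h
    rfl

/-- Telescoping in direction `i`: the part of the boundary formula coming from the two faces
orthogonal to `i`. -/
lemma sum_cells_diff (N : ℕ) (S : Finset ι) (i : ι) (hi : i ∈ S) (F : (ι → ℕ) → ZMod 2) :
    ∑ x ∈ cells N S, (F (x + Pi.single i 1) + F x) =
      ∑ y ∈ cells N (S.erase i), (F y + F (Function.update y i 0)) := by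
  rw [sum_cells N S i hi]
  refine Finset.sum_congr rfl fun y hy => ?_
  have hyN : y i = N := by simpa using mem_cells.1 hy i
  have hup : ∀ t, Function.update y i t + Pi.single i 1 = Function.update y i (t + 1) := by
    intro t
    ext j
    by_cases hj : j = i
    · subst hj; simp
    · simp [hj]
  have := Finset.sum_range_sub (fun t => F (Function.update y i t)) N
  simp only [CharTwo.sub_eq_add] at this
  simp only [hup, this]
  rw [← hyN, Function.update_eq_self]

/-- The total of the cup product over the face `x i = N` (`i ∉ l`) is `1`. -/
lemma sum_cupDiff (g : ι → (ι → ℕ) → ZMod 2) (N : ℕ)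
    (h0 : ∀ k x, x k = 0 → g k x = 0) (h1 : ∀ k x, x k = N → g k x = 1) (l : List ι)
    (hl : l.Nodup) : ∑ x ∈ cells N l.toFinset, cupDiff g l x l.toFinset = 1 := by
  induction l with
  | nil => simp [cupDiff, cells]
  | cons k l ih =>
    obtain ⟨hk, hl⟩ := List.nodup_cons.1 hl
    set S := (k :: l).toFinset with hS
    have hkS : k ∈ S := by simp [hS]
    have hSk : S.erase k = l.toFinset := by
      rw [hS, List.toFinset_cons, Finset.erase_insert (by simpa using hk)]
    -- Closedness turns `dg ∪ ω` into the coboundary of `g ∪ ω`.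
    have step : ∀ x, cupDiff g (k :: l) x S = ∑ i ∈ S,
        (g k (x + Pi.single i 1) * cupDiff g l (x + Pi.single i 1) (S.erase i) +
          g k x * cupDiff g l x (S.erase i)) := by
      intro x
      simp only [cupDiff, add_mul, Finset.sum_add_distrib, ← Finset.mul_sum, cupDiff_closed]
    simp only [step]
    rw [Finset.sum_comm]
    have tel : ∀ i ∈ S, ∑ x ∈ cells N S,
        (g k (x + Pi.single i 1) * cupDiff g l (x + Pi.single i 1) (S.erase i) +
          g k x * cupDiff g l x (S.erase i)) = _ := fun i hi =>
      sum_cells_diff N S i hi fun x => g k x * cupDiff g l x (S.erase i)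
    rw [Finset.sum_congr rfl tel, Finset.sum_eq_single_of_mem k hkS]
    · rw [hSk, ← ih hl]
      refine Finset.sum_congr rfl fun y hy => ?_
      have hyN : y k = N := by simpa [hk] using mem_cells.1 hy k
      rw [h1 k y hyN, h0 k (Function.update y k 0) (by simp)]
      ring
    · intro i hi hik
      refine Finset.sum_eq_zero fun y hy => ?_
      have hyN : y i = N := by simpa using mem_cells.1 hy i
      have hil : i ∈ l := by
        have : i = k ∨ i ∈ l := by simpa [hS] using hi
        exact this.resolve_left hik
      rw [cupDiff_eq_zero g N h0 h1 i l y _ hil (by simp) (Or.inr hyN),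
        cupDiff_eq_zero g N h0 h1 i l (Function.update y i 0) _ hil (by simp) (Or.inl (by simp))]
      simp

/-- Combinatorial Poincaré–Miranda theorem: a single unit cube on which every `g k` takes both
values. -/
lemma exists_cell (g : ι → (ι → ℕ) → ZMod 2) (N : ℕ)
    (h0 : ∀ k x, x k = 0 → g k x = 0) (h1 : ∀ k x, x k = N → g k x = 1) :
    ∃ x : ι → ℕ, (∀ i, x i < N) ∧ ∀ k, ∃ a b : ι → ℕ, (∀ i, x i ≤ a i ∧ a i ≤ x i + 1) ∧
      (∀ i, x i ≤ b i ∧ b i ≤ x i + 1) ∧ g k a = 0 ∧ g k b = 1 := by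
  have hsum := sum_cupDiff g N h0 h1 (Finset.univ : Finset ι).toList (Finset.nodup_toList _)
  rw [Finset.toList_toFinset] at hsum
  obtain ⟨x, hx, hne⟩ := Finset.exists_ne_zero_of_sum_ne_zero (hsum.trans_ne one_ne_zero)
  refine ⟨x, fun i => by simpa using mem_cells.1 hx i, fun k => ?_⟩
  obtain ⟨a, b, ha, hb, hab⟩ := exists_of_cupDiff_ne_zero g _ x _ hne k (by simp)
  simp only [Finset.mem_univ, if_true] at ha hb
  have two : ∀ s t : ZMod 2, s ≠ t → (s = 0 ∧ t = 1) ∨ (t = 0 ∧ s = 1) := by decide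
  rcases two _ _ hab with h | h
  · exact ⟨a, b, ha, hb, h⟩
  · exact ⟨b, a, hb, ha, h⟩

/-- The point of the box `[u, v]` with index `x` in the subdivision of each side into `N` equal
parts; indices above `N` are clamped to `N`, so the point always lies in the box. -/
noncomputable def gridPoint {κ : Type*} (u v : κ → ℝ) (N : ℕ) (x : κ → ℕ) : κ → ℝ :=
  fun i => u i + (v i - u i) * ((min (x i) N : ℕ) / N)

lemma gridPoint_mem {κ : Type*} {u v : κ → ℝ} (huv : ∀ i, u i < v i) (N : ℕ) (x : κ → ℕ) :
    gridPoint u v N x ∈ Set.Icc u v := by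
  have hd : ∀ i, 0 < v i - u i := fun i => sub_pos.2 (huv i)
  have h0 : ∀ i, (0 : ℝ) ≤ (min (x i) N : ℕ) / N := fun i => by positivity
  have h1 : ∀ i, ((min (x i) N : ℕ) : ℝ) / N ≤ 1 := fun i =>
    div_le_one_of_le₀ (by exact_mod_cast min_le_right _ _) (by positivity)
  constructor <;> intro i <;> simp only [gridPoint]
  · nlinarith [mul_nonneg (hd i).le (h0 i)]
  · nlinarith [mul_le_mul_of_nonneg_left (h1 i) (hd i).le]

lemma abs_gridPoint_sub_le {κ : Type*} {u v : κ → ℝ} (huv : ∀ i, u i < v i) {N : ℕ}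
    {x a : κ → ℕ} (hx : ∀ i, x i < N) (ha : ∀ i, x i ≤ a i ∧ a i ≤ x i + 1) (i : κ) :
    |gridPoint u v N a i - gridPoint u v N x i| ≤ (v i - u i) / N := by
  have hd : 0 < v i - u i := sub_pos.2 (huv i)
  have h1 := hx i
  have h2 := ha i
  have hN : (0 : ℝ) < N := by exact_mod_cast (Nat.zero_le _).trans_lt h1
  rw [gridPoint, gridPoint, min_eq_left h1.le, min_eq_left (by omega : a i ≤ N)]
  have e : u i + (v i - u i) * ((a i : ℝ) / N) - (u i + (v i - u i) * ((x i : ℝ) / N)) =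
      (v i - u i) / N * ((a i : ℝ) - x i) := by ring
  have h3 : (x i : ℝ) ≤ a i := by exact_mod_cast h2.1
  have h4 : (a i : ℝ) ≤ x i + 1 := by exact_mod_cast h2.2
  rw [e, abs_of_nonneg (mul_nonneg (by positivity) (by linarith))]
  exact mul_le_of_le_one_right (by positivity) (by linarith)

end PoincareMiranda

open PoincareMiranda Filter Topology

/-- Poincaré–Miranda type theorem (Lemma 1): if continuous functions `f k` on the box
`Π = Icc u v ⊆ ℝⁿ` are negative on the face `y k = u k` and positive on the face
`y k = v k`, then they have a common zero in the box. -/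
theorem poincare_miranda (n : ℕ) (hn : 0 < n) (u v : Fin n → ℝ)
    (huv : ∀ i, u i < v i)
    (f : Fin n → (Fin n → ℝ) → ℝ)
    (hcont : ∀ k, ContinuousOn (f k) (Set.Icc u v))
    (hneg : ∀ k, ∀ y ∈ Set.Icc u v, y k = u k → f k y < 0)
    (hpos : ∀ k, ∀ y ∈ Set.Icc u v, y k = v k → 0 < f k y) :
    ∃ z ∈ Set.Icc u v, ∀ k, f k z = 0 := by
  classical
  have cell : ∀ m : ℕ, ∃ p ∈ Set.Icc u v, ∀ k, ∃ a ∈ Set.Icc u v, ∃ b ∈ Set.Icc u v,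
      (∀ i, |a i - p i| ≤ (v i - u i) / ((m + 1 : ℕ) : ℝ)) ∧
      (∀ i, |b i - p i| ≤ (v i - u i) / ((m + 1 : ℕ) : ℝ)) ∧ f k a ≤ 0 ∧ 0 ≤ f k b := by
    intro m
    have hm : ((m + 1 : ℕ) : ℝ) ≠ 0 := by positivity
    obtain ⟨x, hx, H⟩ := exists_cell
      (fun k x => if 0 < f k (gridPoint u v (m + 1) x) then (1 : ZMod 2) else 0) (m + 1)
      (fun k x hk => if_neg (hneg k _ (gridPoint_mem huv _ _) (by simp [gridPoint, hk])).not_gt)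
      (fun k x hk => if_pos (hpos k _ (gridPoint_mem huv _ _) (by
        rw [gridPoint, hk, min_self, div_self hm]; ring)))
    refine ⟨gridPoint u v (m + 1) x, gridPoint_mem huv _ _, fun k => ?_⟩
    obtain ⟨a, b, ha, hb, hga, hgb⟩ := H k
    refine ⟨_, gridPoint_mem huv (m + 1) a, _, gridPoint_mem huv (m + 1) b,
      abs_gridPoint_sub_le huv hx ha, abs_gridPoint_sub_le huv hx hb, ?_, ?_⟩
    · by_contra! h
      simp [h] at hga
    · by_contra! h
      simp [h.not_gt] at hgb
  choose p hp a ha b hb hap hbp hfa hfb using cell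
  obtain ⟨z, hz, φ, hφ, hlim⟩ := (isCompact_Icc (a := u) (b := v)).tendsto_subseq hp
  have small : ∀ i, Tendsto (fun m => (v i - u i) / ((φ m + 1 : ℕ) : ℝ)) atTop (𝓝 0) := fun i =>
    tendsto_const_nhds.div_atTop (tendsto_natCast_atTop_atTop.comp
      ((tendsto_add_atTop_nat 1).comp hφ.tendsto_atTop))
  have near : ∀ c : ℕ → Fin n → ℝ,
      (∀ m i, |c m i - p m i| ≤ (v i - u i) / ((m + 1 : ℕ) : ℝ)) → (∀ m, c m ∈ Set.Icc u v) →
      Tendsto (fun m => c (φ m)) atTop (𝓝[Set.Icc u v] z) := by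
    intro c hc hmem
    refine tendsto_nhdsWithin_iff.2 ⟨tendsto_pi_nhds.2 fun i => ?_, .of_forall fun m => hmem _⟩
    have h1 : Tendsto (fun m => c (φ m) i - p (φ m) i) atTop (𝓝 0) :=
      squeeze_zero_norm (fun m => hc (φ m) i) (small i)
    simpa using h1.add (tendsto_pi_nhds.1 hlim i)
  refine ⟨z, hz, fun k => le_antisymm ?_ ?_⟩
  · exact le_of_tendsto ((hcont k z hz).tendsto.comp
      (near (fun m => a m k) (fun m => hap m k) fun m => ha m k)) (.of_forall fun m => hfa _ k)
  · exact ge_of_tendsto ((hcont k z hz).tendsto.comp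
      (near (fun m => b m k) (fun m => hbp m k) fun m => hb m k)) (.of_forall fun m => hfb _ k)
end
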